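/- Let 𝔤 be a finite-dimensional complex simple Lie algebra of type E8, and let (e,h,f) be an sl2-triple in 𝔤 such that e is a distinguished nilpotent element which is not regular. Then e satisfies property (P). -/

import Mathlib

open scoped ComplexOrder

/-- The centralizer `𝔤^e = {x ∈ 𝔤 : ⁅x, e⁆ = 0}` of an element `e`, as a Lie subalgebra. -/
def centralizer (L : Type*) [LieRing L] [LieAlgebra ℂ L] (e : L) : LieSubalgebra ℂ L where
  carrier := {x : L | ⁅x, e⁆ = 0}
  add_mem' := fun {a b} ha hb => by
    simp only [Set.mem_setOf_eq] at *
    rw [add_lie, ha, hb, add_zero]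
  zero_mem' := by simp
  smul_mem' := fun c a ha => by
    simp only [Set.mem_setOf_eq] at *
    rw [smul_lie, ha, smul_zero]
  lie_mem' := fun {a b} ha hb => by
    simp only [Set.mem_setOf_eq] at *
    simp [lie_lie, ha, hb]

/-- Membership in the centre `𝔷(𝔤^e)` of the centralizer of `e`:
`v` centralizes `e` and commutes with every element of `𝔤^e`. -/
def InCenterOfCentralizer (L : Type*) [LieRing L] [LieAlgebra ℂ L] (e v : L) : Prop :=
  ⁅v, e⁆ = 0 ∧ ∀ y : L, ⁅y, e⁆ = 0 → ⁅v, y⁆ = 0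

/-- The centre `𝔷(𝔤^e)` of the centralizer of `e`, as a subspace of `L`. -/
def zCenter (L : Type*) [LieRing L] [LieAlgebra ℂ L] (e : L) : Submodule ℂ L where
  carrier := {v : L | ⁅v, e⁆ = 0 ∧ ∀ y : L, ⁅y, e⁆ = 0 → ⁅v, y⁆ = 0}
  add_mem' := fun {a b} ha hb => ⟨by rw [add_lie, ha.1, hb.1, add_zero],
    fun y hy => by rw [add_lie, ha.2 y hy, hb.2 y hy, add_zero]⟩
  zero_mem' := ⟨zero_lie e, fun y _ => zero_lie y⟩
  smul_mem' := fun c a ha => ⟨by rw [smul_lie, ha.1, smul_zero],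
    fun y hy => by rw [smul_lie, ha.2 y hy, smul_zero]⟩

/-- Property (P) for an `sl₂`-triple `(e, h, f)`: for every nonzero `v ∈ 𝔷(𝔤^e)`, the
eigenspace `𝔷_max` of the restriction of `ad h` to `𝔷(𝔤^e)` for its largest eigenvalue is
contained in `[[f, 𝔤^e], v] = {⁅⁅f, x⁆, v⁆ : x ∈ 𝔤^e}`. -/
def PropertyP (L : Type*) [LieRing L] [LieAlgebra ℂ L] (e h f : L) : Prop :=
  ∀ m : ℂ,
    (∃ z : L, z ≠ 0 ∧ InCenterOfCentralizer L e z ∧ ⁅h, z⁆ = m • z) →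
    (∀ m' : ℂ, (∃ z : L, z ≠ 0 ∧ InCenterOfCentralizer L e z ∧ ⁅h, z⁆ = m' • z) → m' ≤ m) →
    ∀ v : L, InCenterOfCentralizer L e v → v ≠ 0 →
      ∀ z : L, InCenterOfCentralizer L e z → ⁅h, z⁆ = m • z →
        ∃ x : L, ⁅x, e⁆ = 0 ∧ ⁅⁅f, x⁆, v⁆ = z

/-- The stabilizer `{x ∈ 𝔮 : ξ(⁅x, y⁆) = 0 for all y ∈ 𝔮}` of a linear functional `ξ`. -/
def coadStab (Q : Type*) [LieRing Q] [LieAlgebra ℂ Q] (ξ : Module.Dual ℂ Q) : Submodule ℂ Q where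
  carrier := {x : Q | ∀ y : Q, ξ ⁅x, y⁆ = 0}
  add_mem' := fun {a b} ha hb y => by rw [add_lie, map_add, ha y, hb y, add_zero]
  zero_mem' := fun y => by rw [zero_lie, map_zero]
  smul_mem' := fun c a ha y => by rw [smul_lie, map_smul, ha y, smul_zero]

/-- The index of a complex Lie algebra:
`ind 𝔮 = min_{ξ ∈ 𝔮*} dim {x ∈ 𝔮 : ξ(⁅x, y⁆) = 0 for all y ∈ 𝔮}`. -/
noncomputable def lieIndex (Q : Type*) [LieRing Q] [LieAlgebra ℂ Q] : ℕ :=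
  ⨅ ξ : Module.Dual ℂ Q, Module.finrank ℂ ↥(coadStab Q ξ)

/-- A nilpotent element `e` is distinguished if the only `x ∈ 𝔤^e` such that `ad x` is a
semisimple endomorphism of `𝔤` is `x = 0`. -/
def IsDistinguished (L : Type*) [LieRing L] [LieAlgebra ℂ L] (e : L) : Prop :=
  ∀ x : L, ⁅x, e⁆ = 0 → (LieAlgebra.ad ℂ L x).IsSemisimple → x = 0

/-- Operators `E, H, F` satisfying the defining relations of `sl₂` (all three may vanish). -/
structure Sl2Relations {M : Type*} [AddCommGroup M] [Module ℂ M] (E H F : Module.End ℂ M) :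
    Prop where
  lie_h_e : ∀ x, H (E x) = E (H x) + (2 : ℂ) • E x
  lie_h_f : ∀ x, H (F x) = F (H x) - (2 : ℂ) • F x
  lie_e_f : ∀ x, E (F x) = F (E x) + H x

namespace Sl2Relations

open Polynomial Module

variable {M : Type*} [AddCommGroup M] [Module ℂ M] {E H F : End ℂ M}

lemma flip (r : Sl2Relations E H F) : Sl2Relations F (-H) E where
  lie_h_e x := by simp [r.lie_h_f x]; abel
  lie_h_f x := by simp [r.lie_h_e x]; abel
  lie_e_f x := by simp [r.lie_e_f x]

lemma h_pow_e (r : Sl2Relations E H F) (n : ℕ) (x : M) :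
    H ((E ^ n) x) = (E ^ n) (H x) + (2 * n : ℂ) • (E ^ n) x := by
  induction n generalizing x with
  | zero => simp
  | succ n ih =>
    rw [pow_succ', End.mul_apply, End.mul_apply, r.lie_h_e, ih, map_add, map_smul]
    push_cast
    module

/-- Raising by `E` intertwines a polynomial in `H` with its translate. -/
lemma aeval_h_e (r : Sl2Relations E H F) (p : ℂ[X]) (x : M) :
    aeval H p (E x) = E (aeval H (p.comp (X + C 2)) x) := by
  induction p using Polynomial.induction_on' generalizing x with
  | add p q hp hq => simp [hp, hq]
  | monomial n a =>
    have key : ∀ (n : ℕ) (x : M), (H ^ n) (E x) = E (((H + algebraMap ℂ _ 2) ^ n) x) := by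
      intro n
      induction n with
      | zero => simp
      | succ n ih =>
        intro x
        rw [pow_succ, End.mul_apply, r.lie_h_e, ← map_smul, ← map_add, ih, pow_succ, End.mul_apply]
        simp
    have h2 : aeval H ((monomial n a).comp (X + C 2)) = a • (H + algebraMap ℂ _ 2) ^ n := by
      rw [monomial_comp, map_mul, aeval_C, map_pow, map_add, aeval_X, aeval_C, Algebra.smul_def]
    rw [h2, aeval_monomial, ← Algebra.smul_def, LinearMap.smul_apply, LinearMap.smul_apply,
      map_smul, key]

lemma e_pow_f (r : Sl2Relations E H F) (x : M) (hx : F (E x) = 0) (n : ℕ) :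
    E ((F ^ (n + 1)) x) = (n + 1 : ℂ) • (F ^ n) (H x - (n : ℂ) • x) := by
  induction n with
  | zero => simp [r.lie_e_f, hx]
  | succ n ih =>
    have h1 := r.flip.h_pow_e (n + 1) x
    rw [pow_succ' F (n + 1), End.mul_apply, r.lie_e_f, ih]
    simp only [LinearMap.neg_apply, neg_eq_iff_eq_neg] at h1
    rw [h1, map_smul, ← End.mul_apply F, ← pow_succ']
    simp only [map_neg, map_sub, map_smul]
    push_cast
    module

lemma pow_e_pow_f (r : Sl2Relations E H F) (n : ℕ) (x : M) (hx : F (E x) = 0) :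
    (E ^ n) ((F ^ n) x) =
      (n.factorial : ℂ) • aeval H (∏ i ∈ Finset.range n, (X - C (i : ℂ))) x := by
  induction n generalizing x with
  | zero => simp
  | succ n ih =>
    have hy : F (E (H x - (n : ℂ) • x)) = 0 := by
      have h1 : E (H x) = H (E x) - (2 : ℂ) • E x := by rw [r.lie_h_e]; abel
      have h2 : F (H (E x)) = H (F (E x)) + (2 : ℂ) • F (E x) := by rw [r.lie_h_f]; abel
      simp [h1, h2, hx]
    rw [pow_succ E, End.mul_apply, r.e_pow_f x hx, map_smul, ih _ hy, Finset.prod_range_succ,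
      map_mul, End.mul_apply, smul_smul, Nat.factorial_succ]
    simp [mul_comm, Nat.cast_smul_eq_nsmul]

lemma pow_f_ne_zero (r : Sl2Relations E H F) {x : M} {n k : ℕ} (hx : E x = 0)
    (hH : H x = (n : ℂ) • x) (h0 : x ≠ 0) (hk : k ≤ n) : (F ^ k) x ≠ 0 := by
  intro h
  have hp := r.pow_e_pow_f k x (by simp [hx])
  have hv : H.HasEigenvector (n : ℂ) x :=
    End.hasEigenvector_iff.mpr ⟨End.mem_eigenspace_iff.mpr hH, h0⟩
  rw [h, map_zero, End.aeval_apply_of_hasEigenvector hv, eq_comm, smul_eq_zero,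
    smul_eq_zero, or_iff_left h0, eval_prod, Finset.prod_eq_zero_iff] at hp
  rcases hp with hp | ⟨i, hi, hp⟩
  · exact Nat.factorial_ne_zero k (by exact_mod_cast hp)
  · simp only [eval_sub, eval_X, eval_C, sub_eq_zero, Nat.cast_inj] at hp
    have := Finset.mem_range.mp hi
    omega

variable [FiniteDimensional ℂ M]

lemma isNilpotent_e (r : Sl2Relations E H F) : IsNilpotent E := by
  by_contra hE
  have hne : ∀ n, E ^ n ≠ 0 := fun n hn => hE ⟨n, hn⟩
  let D : End ℂ (End ℂ M) := LinearMap.mulLeft ℂ H - LinearMap.mulRight ℂ H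
  have hD : ∀ n : ℕ, D.HasEigenvalue (2 * n : ℂ) := fun n =>
    End.hasEigenvalue_of_hasEigenvector (x := E ^ n)
      (End.hasEigenvector_iff.mpr ⟨End.mem_eigenspace_iff.mpr
        (LinearMap.ext fun x => by simp [D, r.h_pow_e]), hne n⟩)
  refine Set.infinite_of_injective_forall_mem (f := fun n : ℕ => (2 * n : ℂ)) ?_ hD
    (End.finite_hasEigenvalue D)
  intro a b hab
  simpa using hab

lemma isNilpotent_f (r : Sl2Relations E H F) : IsNilpotent F := r.flip.isNilpotent_e

lemma exists_aeval_eq_zero (r : Sl2Relations E H F) :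
    ∃ n, ∀ x, F (E x) = 0 → aeval H (∏ i ∈ Finset.range n, (X - C (i : ℂ))) x = 0 := by
  obtain ⟨n, hn⟩ := r.isNilpotent_f
  refine ⟨n, fun x hx => ?_⟩
  have h := r.pow_e_pow_f n x hx
  rw [hn] at h
  simpa [Nat.factorial_ne_zero] using h.symm

lemma exists_weight_eq (r : Sl2Relations E H F) {x : M} {a : ℂ} (hx : E x = 0) (hH : H x = a • x)
    (h0 : x ≠ 0) : ∃ n : ℕ, a = n := by
  obtain ⟨n, hn⟩ := r.exists_aeval_eq_zero
  have h := hn x (by simp [hx])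
  have hv : H.HasEigenvector a x := End.hasEigenvector_iff.mpr ⟨End.mem_eigenspace_iff.mpr hH, h0⟩
  rw [End.aeval_apply_of_hasEigenvector hv, smul_eq_zero, or_iff_left h0, eval_prod,
    Finset.prod_eq_zero_iff] at h
  obtain ⟨i, -, hi⟩ := h
  exact ⟨i, by simpa [sub_eq_zero] using hi⟩

lemma pow_f_eq_zero (r : Sl2Relations E H F) {x : M} {n : ℕ} (hx : E x = 0)
    (hH : H x = (n : ℂ) • x) : (F ^ (n + 1)) x = 0 := by
  by_contra h
  have h1 : E ((F ^ (n + 1)) x) = 0 := by rw [r.e_pow_f x (by simp [hx])]; simp [hH]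
  have h2 := r.flip.h_pow_e (n + 1) x
  simp only [LinearMap.neg_apply, neg_eq_iff_eq_neg, hH] at h2
  obtain ⟨k, hk⟩ := r.exists_weight_eq h1 (a := -n - 2) (by
    rw [h2]
    simp only [map_neg, map_smul]
    push_cast
    module) h
  have : (0 : ℝ) ≤ -n - 2 := by
    have : ((-n - 2 : ℝ) : ℂ) = ((k : ℝ) : ℂ) := by push_cast; simpa using hk
    rw [Complex.ofReal_inj.mp this]
    positivity
  have : (0 : ℝ) ≤ n := by positivity
  linarith

/-- The image of `E` meets the kernel of `F` trivially. -/
lemma e_eq_zero_of_f_e (r : Sl2Relations E H F) {x : M} (hx : F (E x) = 0) : E x = 0 := by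
  obtain ⟨n, hn⟩ := r.exists_aeval_eq_zero
  obtain ⟨k, hk⟩ := r.flip.exists_aeval_eq_zero
  set p : ℂ[X] := ∏ i ∈ Finset.range n, (X - C (i + 2 : ℂ)) with hp
  set q : ℂ[X] := ∏ i ∈ Finset.range k, (X - C (-i : ℂ)) with hq
  have hcop : IsCoprime p q := by
    refine IsCoprime.prod_left fun i _ => IsCoprime.prod_right fun j _ => ?_
    refine isCoprime_X_sub_C_of_isUnit_sub (IsUnit.mk0 _ ?_)
    rw [sub_neg_eq_add]
    have : ((i + 2 + j : ℕ) : ℂ) ≠ 0 := Nat.cast_ne_zero.mpr (by omega)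
    exact_mod_cast this
  have h1 : aeval H p (E x) = 0 := by
    rw [r.aeval_h_e, hp, prod_comp]
    have : ∀ i : ℕ, (X - C (i + 2 : ℂ)).comp (X + C 2) = X - C (i : ℂ) := by
      intro i; simp
    simp only [this]
    rw [hn x hx, map_zero]
  have h2 : aeval H q (E x) = 0 := by
    have h := hk (E x) (by simp [hx])
    have h3 : aeval H q = (-1 : ℂ) ^ k • aeval (-H) (∏ i ∈ Finset.range k, (X - C (i : ℂ))) := by
      rw [hq]
      clear * -
      induction k with
      | zero => simp
      | succ k ih =>
        rw [Finset.prod_range_succ, Finset.prod_range_succ, map_mul, map_mul, ih, pow_succ,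
          mul_smul, smul_mul_assoc, neg_one_smul, ← mul_neg]
        congr 2
        simp
        abel
    rw [h3, LinearMap.smul_apply, h, smul_zero]
  obtain ⟨a, b, hab⟩ := hcop
  have h := congrArg (fun s => aeval H s (E x)) hab
  simpa [h1, h2] using h.symm

lemma ker_sup_range (r : Sl2Relations E H F) : LinearMap.ker E ⊔ LinearMap.range F = ⊤ := by
  have hd : LinearMap.ker E ⊓ LinearMap.range F = ⊥ := by
    rw [eq_bot_iff]
    rintro _ ⟨hx, y, rfl⟩
    exact r.flip.e_eq_zero_of_f_e hx
  have hinj : Function.Injective (F.domRestrict (LinearMap.range E)) := by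
    rw [injective_iff_map_eq_zero]
    rintro ⟨_, y, rfl⟩ h
    exact Subtype.ext (r.e_eq_zero_of_f_e h)
  have hle : finrank ℂ (LinearMap.range E) ≤ finrank ℂ (LinearMap.range F) := by
    rw [← LinearMap.finrank_range_of_inj hinj]
    refine Submodule.finrank_mono ?_
    rintro _ ⟨y, rfl⟩
    exact ⟨y, rfl⟩
  have h1 := Submodule.finrank_sup_add_finrank_inf_eq (LinearMap.ker E) (LinearMap.range F)
  have h2 := E.finrank_range_add_finrank_ker
  rw [hd, finrank_bot] at h1
  refine Submodule.eq_top_of_finrank_eq (le_antisymm (Submodule.finrank_le _) ?_)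
  omega

/-- A subspace stable under `F` and containing all highest weight vectors is everything. -/
lemma eq_top_of_ker_le (r : Sl2Relations E H F) {N : Submodule ℂ M} (hN : ∀ x ∈ N, F x ∈ N)
    (hker : LinearMap.ker E ≤ N) : N = ⊤ := by
  have h : ∀ n, N ⊔ LinearMap.range (F ^ n) = ⊤ := by
    intro n
    induction n with
    | zero => simp [Module.End.one_eq_id]
    | succ n ih =>
      rw [eq_top_iff, ← r.ker_sup_range]
      refine sup_le (hker.trans le_sup_left) ?_
      rintro _ ⟨y, rfl⟩
      obtain ⟨a, ha, _, ⟨b, rfl⟩, rfl⟩ := Submodule.mem_sup.mp (ih ▸ Submodule.mem_top : y ∈ _)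
      rw [map_add]
      exact Submodule.add_mem_sup (hN a ha) ⟨b, by rw [pow_succ']; rfl⟩
  obtain ⟨n, hn⟩ := r.isNilpotent_f
  simpa [hn] using h n

lemma iSup_eigenspace_eq_top (r : Sl2Relations E H F) :
    ⨆ j : ℤ, H.eigenspace (j : ℂ) = ⊤ := by
  refine r.eq_top_of_ker_le ?_ ?_
  · intro x hx
    induction hx using Submodule.iSup_induction' with
    | mem j x hx =>
      rw [End.mem_eigenspace_iff] at hx
      refine Submodule.mem_iSup_of_mem (j - 2) ?_
      rw [End.mem_eigenspace_iff, r.lie_h_f, hx, map_smul]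
      push_cast
      module
    | zero => simp
    | add x y _ _ hx hy => rw [map_add]; exact add_mem hx hy
  · obtain ⟨n, hn⟩ := r.exists_aeval_eq_zero
    refine le_trans (fun x hx => hn x (by simp [LinearMap.mem_ker.mp hx])) ?_
      (b := LinearMap.ker (aeval H (∏ i ∈ Finset.range n, (X - C (i : ℂ)))))
    clear hn
    induction n with
    | zero =>
      intro x hx
      have : x = 0 := by simpa using hx
      simp [this]
    | succ n ih =>
      rw [Finset.prod_range_succ, ← sup_ker_aeval_eq_ker_aeval_mul_of_coprime]
      · refine sup_le ih fun x hx => Submodule.mem_iSup_of_mem (n : ℤ) ?_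
        rw [End.mem_eigenspace_iff]
        simpa [sub_eq_zero, Nat.cast_smul_eq_nsmul] using hx
      · refine IsCoprime.prod_left fun i hi =>
          isCoprime_X_sub_C_of_isUnit_sub (IsUnit.mk0 _ ?_)
        rw [sub_ne_zero, Ne, Nat.cast_inj]
        exact (Finset.mem_range.mp hi).ne

end Sl2Relations

namespace Module.End

open Polynomial

variable {M : Type*} [AddCommGroup M] [Module ℂ M]

lemma aeval_mem_of_forall_mem {H : End ℂ M} {Q : Submodule ℂ M} (hQ : ∀ x ∈ Q, H x ∈ Q)
    (p : ℂ[X]) {x : M} (hx : x ∈ Q) : aeval H p x ∈ Q := by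
  induction p using Polynomial.induction_on generalizing x with
  | C a => simpa using Q.smul_mem a hx
  | add p q hp hq => simpa using add_mem (hp hx) (hq hx)
  | monomial n a ih =>
    rw [pow_succ, ← mul_assoc, map_mul, mul_apply, aeval_X]
    exact ih (hQ x hx)

variable [FiniteDimensional ℂ M] (H : End ℂ M)

/-- The integral eigenvalues of `H`, together with `0`. -/
noncomputable def weights : Finset ℤ :=
  insert 0 (H.finite_hasEigenvalue.preimage Int.cast_injective.injOn).toFinset

open Classical in
/-- The projection onto the eigenspace of `H` for the integral eigenvalue `j`, as a polynomial
in `H`. -/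
noncomputable def weightProj (j : ℤ) : End ℂ M :=
  if j ∈ H.weights then aeval H (Lagrange.basis H.weights (fun i : ℤ => (i : ℂ)) j) else 0

lemma sum_weightProj (x : M) : ∑ j ∈ H.weights, H.weightProj j x = x := by
  have h := Lagrange.sum_basis (s := H.weights) (v := fun i : ℤ => (i : ℂ))
    Int.cast_injective.injOn ⟨0, Finset.mem_insert_self _ _⟩
  have h2 := congrArg (fun p => aeval H p x) h
  simp only [map_sum, map_one, LinearMap.sum_apply, one_apply] at h2
  rw [← h2]
  refine Finset.sum_congr rfl fun j hj => ?_
  simp only [weightProj, if_pos hj]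
  rw [h2]

variable {H}

lemma weightProj_of_notMem {j : ℤ} (hj : j ∉ H.weights) : H.weightProj j = 0 := if_neg hj

lemma weightProj_apply_of_ne {i j : ℤ} {x : M} (hx : H x = (i : ℂ) • x) (hij : i ≠ j) :
    H.weightProj j x = 0 := by
  by_cases h0 : x = 0
  · simp [h0]
  have hv : H.HasEigenvector (i : ℂ) x := hasEigenvector_iff.mpr ⟨mem_eigenspace_iff.mpr hx, h0⟩
  have hi : i ∈ H.weights := by
    simp [weights, hasEigenvalue_of_hasEigenvector hv]
  unfold weightProj
  split_ifs
  · rw [aeval_apply_of_hasEigenvector hv, Lagrange.eval_basis_of_ne hij.symm hi, zero_smul]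
  · rfl

lemma weightProj_apply_self {i : ℤ} {x : M} (hx : H x = (i : ℂ) • x) :
    H.weightProj i x = x := by
  have h := H.sum_weightProj x
  rw [Finset.sum_eq_single i] at h
  · exact h
  · exact fun j _ hj => weightProj_apply_of_ne hx hj.symm
  · intro hi
    rw [weightProj_of_notMem hi, LinearMap.zero_apply]

lemma weightProj_mem {Q : Submodule ℂ M} (hQ : ∀ x ∈ Q, H x ∈ Q) (j : ℤ) {x : M} (hx : x ∈ Q) :
    H.weightProj j x ∈ Q := by
  unfold weightProj
  split_ifs
  · exact aeval_mem_of_forall_mem hQ _ hx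
  · simp

variable (hH : ⨆ j : ℤ, H.eigenspace (j : ℂ) = ⊤)
include hH

lemma apply_weightProj (j : ℤ) (x : M) : H (H.weightProj j x) = (j : ℂ) • H.weightProj j x := by
  have hx : x ∈ ⨆ j : ℤ, H.eigenspace (j : ℂ) := hH ▸ Submodule.mem_top
  induction hx using Submodule.iSup_induction' with
  | mem i x hx =>
    rw [mem_eigenspace_iff] at hx
    by_cases hij : i = j
    · subst hij
      rw [weightProj_apply_self hx, hx]
    · simp [weightProj_apply_of_ne hx hij]
  | zero => simp
  | add x y _ _ hx hy => simp [hx, hy]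

lemma le_of_forall_weight {Q N : Submodule ℂ M} (hQ : ∀ x ∈ Q, H x ∈ Q)
    (h : ∀ (j : ℤ), ∀ x ∈ Q, H x = (j : ℂ) • x → x ∈ N) : Q ≤ N := fun x hx => by
  rw [← H.sum_weightProj x]
  exact sum_mem fun j _ => h j _ (weightProj_mem hQ j hx) (apply_weightProj hH j x)

end Module.End

section Killing

open Module LieAlgebra

variable {L : Type*} [LieRing L] [LieAlgebra ℂ L]

lemma killingForm_lie_left (x y z : L) : killingForm ℂ L ⁅x, y⁆ z = killingForm ℂ L x ⁅y, z⁆ :=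
  LieModule.traceForm_apply_lie_apply ℂ L L x y z

lemma killingForm_lie_left' (x y z : L) :
    killingForm ℂ L ⁅x, y⁆ z = -killingForm ℂ L y ⁅x, z⁆ := by
  rw [← lie_skew, map_neg, LinearMap.neg_apply, killingForm_lie_left]

variable [IsKilling ℂ L]

lemma eq_zero_of_killingForm {x : L} (hx : ∀ y, killingForm ℂ L x y = 0) : x = 0 :=
  (IsKilling.killingForm_nondegenerate ℂ L).1 x hx

variable [FiniteDimensional ℂ L]

lemma eq_zero_of_forall_lie {x : L} (hx : ∀ y : L, ⁅x, y⁆ = 0) : x = 0 :=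
  (LieDerivation.IsKilling.ad_apply_eq_zero_iff ℂ L x).mp (LieDerivation.ext fun y => by simp [hx])

/-- The orthogonal of the centralizer of `x` is the range of `ad x`. -/
lemma exists_lie_eq_of_orthogonal {x w : L}
    (h : ∀ y : L, ⁅x, y⁆ = 0 → killingForm ℂ L w y = 0) : ∃ u, ⁅x, u⁆ = w := by
  have hr : (killingForm ℂ L).IsRefl := (LieModule.traceForm_isSymm ℂ L L).isRefl
  have h2 := LinearMap.BilinForm.orthogonal_orthogonal
    (IsKilling.killingForm_nondegenerate ℂ L) hr (LinearMap.range (ad ℂ L x))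
  suffices w ∈ LinearMap.range (ad ℂ L x) from this
  rw [← h2, LinearMap.BilinForm.mem_orthogonal_iff]
  intro y hy
  rw [LinearMap.BilinForm.mem_orthogonal_iff] at hy
  refine (hr.eq_iff).mp (h y (eq_zero_of_killingForm fun u => ?_))
  have := hy ⁅x, u⁆ ⟨u, rfl⟩
  rw [killingForm_lie_left', neg_eq_zero] at this
  rw [hr.eq_iff]
  exact this

lemma Module.End.IsSemisimple.apply_eq_zero_of_pow_apply_eq_zero {M : Type*} [AddCommGroup M]
    [Module ℂ M] [FiniteDimensional ℂ M] {S : End ℂ M} (hS : S.IsSemisimple) {n : ℕ} {x : M}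
    (h : (S ^ n) x = 0) : S x = 0 := by
  have h1 : x ∈ S.maxGenEigenspace 0 := by
    rw [End.mem_maxGenEigenspace]
    exact ⟨n, by simpa using h⟩
  rw [hS.isFinitelySemisimple.maxGenEigenspace_eq_eigenspace, End.mem_eigenspace_iff] at h1
  simpa using h1

/-- The Jordan decomposition of an element of a Lie algebra with nondegenerate Killing form. -/
lemma exists_jordan_decomposition (c : L) : ∃ s n : L, c = s + n ∧ ⁅s, n⁆ = 0 ∧
    (ad ℂ L s).IsSemisimple ∧ IsNilpotent (ad ℂ L n) ∧
    ∀ (k : ℕ) (x : L), ((ad ℂ L c) ^ k) x = 0 → ⁅s, x⁆ = 0 := by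
  obtain ⟨n', hn', s', hs', hnil, hss, hc⟩ := (ad ℂ L c).exists_isNilpotent_isSemisimple
  have hcn : Commute (ad ℂ L c) n' :=
    (Algebra.commute_of_mem_adjoin_self hn')
  have hs'' : ∀ (α : ℂ) (x : L), x ∈ (ad ℂ L c).maxGenEigenspace α → s' x = α • x := by
    intro α x hx
    have h2 : x ∈ (-n').maxGenEigenspace 0 := by
      obtain ⟨k, hk⟩ := hnil.neg
      rw [End.mem_maxGenEigenspace]
      exact ⟨k, by rw [zero_smul, sub_zero, hk, LinearMap.zero_apply]⟩
    have h3 := End.genEigenspace_inf_le_add _ _ _ _ _ _ hcn.neg_right ⟨hx, h2⟩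
    have h4 : x ∈ s'.maxGenEigenspace α := by
      have : ad ℂ L c + -n' = s' := by rw [hc]; abel
      rw [this] at h3
      simpa using h3
    rwa [hss.isFinitelySemisimple.maxGenEigenspace_eq_eigenspace, End.mem_eigenspace_iff] at h4
  have htop := (ad ℂ L c).iSup_maxGenEigenspace_eq_top
  have hder : ∀ x y : L, s' ⁅x, y⁆ = ⁅x, s' y⁆ - ⁅y, s' x⁆ := by
    intro x y
    have hx : x ∈ ⨆ α : ℂ, (ad ℂ L c).maxGenEigenspace α := htop ▸ Submodule.mem_top
    induction hx using Submodule.iSup_induction' with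
    | zero => simp
    | add x₁ x₂ _ _ h₁ h₂ => rw [add_lie, map_add, h₁, h₂, map_add, add_lie, lie_add]; abel
    | mem α x hx =>
      have hy : y ∈ ⨆ α : ℂ, (ad ℂ L c).maxGenEigenspace α := htop ▸ Submodule.mem_top
      induction hy using Submodule.iSup_induction' with
      | zero => simp
      | add y₁ y₂ _ _ h₁ h₂ => rw [lie_add, map_add, h₁, h₂, map_add, add_lie, lie_add]; abel
      | mem β y hy =>
        have hxy : ⁅x, y⁆ ∈ (ad ℂ L c).maxGenEigenspace (α + β) :=
          LieModule.lie_mem_maxGenEigenspace_toEnd hx hy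
        rw [hs'' _ _ hx, hs'' _ _ hy, hs'' _ _ hxy, lie_smul, lie_smul, ← lie_skew x y]
        module
  obtain ⟨s, hs⟩ := LieDerivation.IsKilling.exists_eq_ad (R := ℂ) (L := L) ⟨s', hder⟩
  have hs3 : ad ℂ L s = s' := LinearMap.ext fun y => by
    simpa using DFunLike.congr_fun hs y
  have hn3 : ad ℂ L (c - s) = n' := by rw [map_sub, hs3, hc]; abel
  refine ⟨s, c - s, by abel, ?_, hs3 ▸ hss, hn3 ▸ hnil, fun k x hx => ?_⟩
  swap
  · have h := hs'' 0 x ((End.mem_maxGenEigenspace _ _ _).mpr ⟨k, by simpa using hx⟩)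
    rw [← hs3, zero_smul] at h
    exact h
  have hcomm : Commute s' n' :=
    (Algebra.commute_of_mem_adjoin_singleton_of_commute hs' hcn.symm).symm
  refine eq_zero_of_forall_lie fun y => ?_
  have h := LinearMap.congr_fun hcomm.eq y
  rw [← hs3, ← hn3] at h
  simpa [sub_eq_zero, lie_lie] using h

end Killing

section Weights

open Module LieAlgebra

variable {L : Type*} [LieRing L] [LieAlgebra ℂ L]

lemma sl2Relations_ad {e h f : L} (he : ⁅h, e⁆ = (2 : ℂ) • e) (hf : ⁅h, f⁆ = -((2 : ℂ) • f))
    (hef : ⁅e, f⁆ = h) : Sl2Relations (ad ℂ L e) (ad ℂ L h) (ad ℂ L f) where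
  lie_h_e x := by simp [leibniz_lie h e, he, add_comm]
  lie_h_f x := by simp [leibniz_lie h f, hf]; abel
  lie_e_f x := by simp [leibniz_lie e f, hef, add_comm]

/-- `x` is an eigenvector of `ad h` for the integral eigenvalue `j`, or zero. -/
def HasWeight (h : L) (j : ℤ) (x : L) : Prop := ⁅h, x⁆ = (j : ℂ) • x

namespace HasWeight

variable {h x y : L} {i j : ℤ}

lemma lie (hx : HasWeight h i x) (hy : HasWeight h j y) : HasWeight h (i + j) ⁅x, y⁆ := by
  unfold HasWeight at *
  rw [leibniz_lie, hx, hy, smul_lie, lie_smul]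
  push_cast
  module

lemma add (hx : HasWeight h i x) (hy : HasWeight h i y) : HasWeight h i (x + y) := by
  unfold HasWeight at *
  rw [lie_add, hx, hy, smul_add]

lemma smul (hx : HasWeight h i x) (a : ℂ) : HasWeight h i (a • x) := by
  unfold HasWeight at *
  rw [lie_smul, hx, smul_comm]

lemma neg (hx : HasWeight h i x) : HasWeight h i (-x) := by
  simpa using hx.smul (-1)

lemma sub (hx : HasWeight h i x) (hy : HasWeight h i y) : HasWeight h i (x - y) := by
  simpa [sub_eq_add_neg] using hx.add hy.neg

lemma eq_zero (hx : HasWeight h i x) (hy : HasWeight h j x) (hij : i ≠ j) : x = 0 := by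
  unfold HasWeight at *
  have : ((i : ℂ) - j) • x = 0 := by rw [sub_smul, ← hx, ← hy, sub_self]
  refine (smul_eq_zero.mp this).resolve_left ?_
  exact_mod_cast sub_ne_zero.mpr hij

lemma killingForm_eq_zero (hx : HasWeight h i x) (hy : HasWeight h j y) (hij : i + j ≠ 0) :
    killingForm ℂ L x y = 0 := by
  have h1 := killingForm_lie_left' h x y
  rw [hx, hy] at h1
  simp only [map_smul, LinearMap.smul_apply, smul_eq_mul] at h1
  have : ((i : ℂ) + j) * killingForm ℂ L x y = 0 := by linear_combination h1
  refine (mul_eq_zero.mp this).resolve_left ?_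
  exact_mod_cast hij

end HasWeight

lemma killingForm_comm (x y : L) : killingForm ℂ L x y = killingForm ℂ L y x :=
  LieModule.traceForm_comm ℂ L L x y

variable [FiniteDimensional ℂ L]

/-- The component of weight `j` with respect to `ad h`. -/
noncomputable abbrev weightPart (h : L) (j : ℤ) : L →ₗ[ℂ] L := (ad ℂ L h).weightProj j

lemma HasWeight.weightPart_self {h x : L} {i : ℤ} (hx : HasWeight h i x) : weightPart h i x = x :=
  End.weightProj_apply_self hx

lemma HasWeight.weightPart_of_ne {h x : L} {i j : ℤ} (hx : HasWeight h i x) (hij : i ≠ j) :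
    weightPart h j x = 0 :=
  End.weightProj_apply_of_ne hx hij

section

variable {h : L} (hH : ⨆ j : ℤ, (ad ℂ L h).eigenspace (j : ℂ) = ⊤)
include hH

lemma hasWeight_weightPart (j : ℤ) (x : L) : HasWeight h j (weightPart h j x) :=
  End.apply_weightProj hH j x

lemma weight_induction {N : Submodule ℂ L} (hN : ∀ (j : ℤ) (x : L), HasWeight h j x → x ∈ N)
    (x : L) : x ∈ N :=
  End.le_of_forall_weight hH (Q := ⊤) (by simp) (fun j x _ hx => hN j x hx) Submodule.mem_top

lemma weight_ext {N : Type*} [AddCommGroup N] [Module ℂ N] (A B : L →ₗ[ℂ] N)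
    (hAB : ∀ (j : ℤ) (x : L), HasWeight h j x → A x = B x) (x : L) : A x = B x :=
  weight_induction hH (N := LinearMap.eqLocus A B) hAB x

lemma weightPart_lie {i : ℤ} {a : L} (ha : HasWeight h i a) (j : ℤ) (x : L) :
    weightPart h (i + j) ⁅a, x⁆ = ⁅a, weightPart h j x⁆ := by
  refine weight_ext hH (weightPart h (i + j) ∘ₗ ad ℂ L a) (ad ℂ L a ∘ₗ weightPart h j)
    (fun k x hx => ?_) x
  by_cases hk : k = j
  · subst hk
    simp only [LinearMap.comp_apply, ad_apply]
    rw [hx.weightPart_self, (ha.lie hx).weightPart_self]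
  · simp only [LinearMap.comp_apply, ad_apply]
    rw [hx.weightPart_of_ne hk, (ha.lie hx).weightPart_of_ne (by omega), lie_zero]

lemma killingForm_weightPart {j : ℤ} {y : L} (hy : HasWeight h j y) (x : L) :
    killingForm ℂ L (weightPart h (-j) x) y = killingForm ℂ L x y := by
  conv_rhs => rw [← (ad ℂ L h).sum_weightProj x]
  rw [map_sum, LinearMap.sum_apply, Finset.sum_eq_single (-j)]
  · intro i _ hi
    exact (hasWeight_weightPart hH i x).killingForm_eq_zero hy (by omega)
  · intro hj
    rw [End.weightProj_of_notMem hj, LinearMap.zero_apply, map_zero, LinearMap.zero_apply]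

lemma killingForm_weightPart' {j : ℤ} {y : L} (hy : HasWeight h j y) (x : L) :
    killingForm ℂ L y (weightPart h (-j) x) = killingForm ℂ L y x := by
  rw [killingForm_comm, killingForm_weightPart hH hy, killingForm_comm]

end

variable [IsKilling ℂ L] {e h f : L}

/-- For a distinguished element `e`, the centralizer of `e` has no vectors of weight zero. -/
lemma eq_zero_of_distinguished (r : Sl2Relations (ad ℂ L e) (ad ℂ L h) (ad ℂ L f))
    (he : HasWeight h 2 e)
    (hdist : ∀ x : L, ⁅x, e⁆ = 0 → (ad ℂ L x).IsSemisimple → x = 0)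
    {y : L} (hy : ⁅e, y⁆ = 0) (hy0 : HasWeight h 0 y) : y = 0 := by
  have hH := r.iSup_eigenspace_eq_top
  let C : LieSubalgebra ℂ L :=
    { LinearMap.ker (ad ℂ L e) ⊓ LinearMap.ker (ad ℂ L h) with
      lie_mem' := by
        rintro a b ⟨ha, ha'⟩ ⟨hb, hb'⟩
        simp only [SetLike.mem_coe, LinearMap.mem_ker, ad_apply]
          at ha ha' hb hb'
        exact ⟨by simp [leibniz_lie e, ha, hb], by simp [leibniz_lie h, ha', hb']⟩ }
  have memC : ∀ x, x ∈ C ↔ ⁅e, x⁆ = 0 ∧ ⁅h, x⁆ = 0 := fun x => Iff.rfl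
  have hnil : ∀ x : C, _root_.IsNilpotent (LieModule.toEnd ℂ C L x) := by
    rintro ⟨x, hx⟩
    obtain ⟨hx, -⟩ := (memC x).mp hx
    obtain ⟨s, n, hc, -, hss, hn, hs⟩ := exists_jordan_decomposition x
    have hse : ⁅s, e⁆ = 0 := hs 1 e (by simp [← lie_skew x e, hx])
    have h0 := hdist s hse hss
    rw [h0, zero_add] at hc
    subst hc
    exact hn
  have : LieModule.IsNilpotent C L := (LieModule.isNilpotent_iff_forall (R := ℂ)).mpr hnil
  have hC : ∀ x ∈ C, ∀ x' ∈ C, killingForm ℂ L x x' = 0 := by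
    intro x hx x' hx'
    have h1 := LieModule.traceForm_eq_zero_of_isNilpotent ℂ C L
    exact LinearMap.congr_fun (LinearMap.congr_fun h1 ⟨x, hx⟩) ⟨x', hx'⟩
  have hyC : y ∈ C := (memC y).mpr ⟨hy, by simpa [HasWeight] using hy0⟩
  have hfy : ⁅f, y⁆ = 0 := by
    simpa using r.pow_f_eq_zero (x := y) (n := 0) hy (by simpa [HasWeight] using hy0)
  refine eq_zero_of_killingForm fun x => ?_
  obtain ⟨a, ha, _, ⟨b, rfl⟩, rfl⟩ :=
    Submodule.mem_sup.mp (r.ker_sup_range ▸ Submodule.mem_top : x ∈ _)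
  rw [map_add, ad_apply, ← killingForm_lie_left, ← lie_skew, hfy, neg_zero, map_zero,
    LinearMap.zero_apply, add_zero, ← killingForm_weightPart' hH hy0]
  refine hC y hyC _ ((memC _).mpr ⟨?_, ?_⟩)
  · rw [← weightPart_lie hH he, show ⁅e, a⁆ = 0 from ha, map_zero]
  · simpa [HasWeight] using hasWeight_weightPart hH (-0) a

end Weights

section GradingAutomorphism

open Module LieAlgebra

variable {L : Type*} [LieRing L] [LieAlgebra ℂ L] [FiniteDimensional ℂ L]

/-- The automorphism acting by `ζ ^ j` on the vectors of weight `j`. -/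
lemma exists_gradingAut {h : L} (hH : ⨆ j : ℤ, (ad ℂ L h).eigenspace (j : ℂ) = ⊤) {ζ : ℂ}
    (hζ : ζ ≠ 0) : ∃ θ : L ≃ₗ⁅ℂ⁆ L, ∀ (j : ℤ) (x : L), HasWeight h j x → θ x = ζ ^ j • x := by
  let T : ℂ → L →ₗ[ℂ] L := fun z => ∑ j ∈ (ad ℂ L h).weights, z ^ j • weightPart h j
  have hT : ∀ (z : ℂ) (j : ℤ) (x : L), HasWeight h j x → T z x = z ^ j • x := by
    intro z j x hx
    simp only [T, LinearMap.sum_apply, LinearMap.smul_apply]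
    rw [Finset.sum_eq_single j]
    · rw [hx.weightPart_self]
    · intro i _ hi
      rw [hx.weightPart_of_ne hi.symm, smul_zero]
    · intro hj
      rw [weightPart, End.weightProj_of_notMem hj, LinearMap.zero_apply, smul_zero]
  have hinv : ∀ z : ℂ, z ≠ 0 → ∀ x, T z⁻¹ (T z x) = x := by
    intro z hz x
    refine weight_ext hH (T z⁻¹ ∘ₗ T z) LinearMap.id (fun j x hx => ?_) x
    have hzj := zpow_ne_zero j hz
    simp [hT z j x hx, hT z⁻¹ j x hx, smul_smul, hzj]
  have hlie : ∀ x y, T ζ ⁅x, y⁆ = ⁅T ζ x, T ζ y⁆ := by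
    have aux : ∀ (i : ℤ) (x y : L), HasWeight h i x → T ζ ⁅x, y⁆ = ⁅T ζ x, T ζ y⁆ := by
      intro i x y hx
      refine weight_ext hH (T ζ ∘ₗ ad ℂ L x) (ad ℂ L (T ζ x) ∘ₗ T ζ) (fun j y hy => ?_) y
      simp only [LinearMap.comp_apply, ad_apply]
      rw [hT ζ i x hx, hT ζ j y hy, hT ζ _ _ (hx.lie hy), zpow_add₀ hζ, smul_lie, lie_smul,
        smul_smul]
    intro x y
    refine weight_ext hH (T ζ ∘ₗ ad ℂ L x) (ad ℂ L (T ζ x) ∘ₗ T ζ) (fun i y hy => ?_) y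
    simp only [LinearMap.comp_apply, ad_apply]
    rw [← lie_skew, map_neg, aux i y x hy, lie_skew]
  let θ : L →ₗ⁅ℂ⁆ L := { T ζ with map_lie' := fun {x y} => hlie x y }
  exact ⟨{ θ with
    invFun := T ζ⁻¹
    left_inv := hinv ζ hζ
    right_inv := fun x => by
      have := hinv ζ⁻¹ (inv_ne_zero hζ) x
      rwa [inv_inv] at this }, hT ζ⟩

lemma exists_homogeneous_of_gradingAut {h : L} {m : ℕ}
    (hH : ⨆ j : ℤ, (ad ℂ L h).eigenspace (j : ℂ) = ⊤)
    (hb : ∀ (j : ℤ) (x : L), HasWeight h j x → x ≠ 0 → -m ≤ j ∧ j ≤ m)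
    {ζ : ℂ} (hζ : IsPrimitiveRoot ζ (m + 2)) {θ : L ≃ₗ⁅ℂ⁆ L}
    (hθ : ∀ (j : ℤ) (x : L), HasWeight h j x → θ x = ζ ^ j • x) {x : L}
    (hx : θ x = ζ ^ 2 • x) :
    ∃ a b, HasWeight h 2 a ∧ HasWeight h (-m) b ∧ x = a + b := by
  have hζ0 : ζ ≠ 0 := hζ.ne_zero (by omega)
  have hcomm : ∀ (j : ℤ) (y : L), weightPart h j (θ y) = ζ ^ j • weightPart h j y := by
    intro j y
    refine weight_ext hH (weightPart h j ∘ₗ (θ : L →ₗ[ℂ] L)) (ζ ^ j • weightPart h j)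
      (fun i y hy => ?_) y
    change weightPart h j (θ y) = ζ ^ j • weightPart h j y
    rw [hθ i y hy, map_smul]
    by_cases hij : i = j
    · rw [hij]
    · rw [hy.weightPart_of_ne hij, smul_zero, smul_zero]
  have hzero : ∀ j : ℤ, j ≠ 2 → j ≠ -m → weightPart h j x = 0 := by
    intro j h2 hm
    by_contra hne
    have h1 := hcomm j x
    rw [hx, map_smul] at h1
    have h3 : (ζ ^ (2 : ℤ) - ζ ^ j) • weightPart h j x = 0 := by
      rw [sub_smul, ← h1]; simp
    have h4 := sub_eq_zero.mp ((smul_eq_zero.mp h3).resolve_right hne)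
    have h5 : ζ ^ (j - 2) = 1 := by
      rw [zpow_sub₀ hζ0, ← h4, div_self (zpow_ne_zero _ hζ0)]
    obtain ⟨q, hq⟩ := (hζ.zpow_eq_one_iff_dvd _).mp h5
    obtain ⟨h6, h7⟩ := hb j _ (hasWeight_weightPart hH j x) hne
    push_cast at hq
    have hq1 : q < 1 := by by_contra; nlinarith
    have hq2 : -2 < q := by by_contra; nlinarith
    interval_cases q
    · omega
    · omega
  refine ⟨weightPart h 2 x, weightPart h (-m) x, hasWeight_weightPart hH _ _,
    hasWeight_weightPart hH _ _, ?_⟩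
  have hw : ∀ j, j ∉ (ad ℂ L h).weights → weightPart h j x = 0 := fun j hj => by
    rw [weightPart, End.weightProj_of_notMem hj, LinearMap.zero_apply]
  conv_lhs => rw [← (ad ℂ L h).sum_weightProj x]
  rw [← Finset.sum_pair (f := fun j => weightPart h j x) (by omega : (2 : ℤ) ≠ -m)]
  exact Finset.sum_congr_of_eq_on_inter (fun j _ hj => hzero j (by simp_all) (by simp_all))
    (fun j _ hj => hw j hj) (fun j _ _ => rfl)

variable [IsKilling ℂ L]

/-- An automorphism scaling an element scales its Jordan components. -/
lemma map_eq_smul_of_jordan {s n : L} {a : ℂ} (hsn : ⁅s, n⁆ = 0)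
    (hs : (ad ℂ L s).IsSemisimple) (hn : IsNilpotent (ad ℂ L n)) (θ : L ≃ₗ⁅ℂ⁆ L)
    (h : θ (s + n) = a • (s + n)) : θ s = a • s ∧ θ n = a • n := by
  have conj : ∀ x : L, ad ℂ L (θ x) = θ.toLinearEquiv.conjAlgEquiv ℂ (ad ℂ L x) := by
    intro x
    ext y
    obtain ⟨y, rfl⟩ := θ.surjective y
    change ⁅θ x, θ y⁆ = θ ⁅x, θ.symm (θ y)⁆
    rw [LieEquiv.symm_apply_apply, LieEquiv.map_lie]
  have hθs : (ad ℂ L (θ s)).IsSemisimple := by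
    refine (LinearEquiv.isSemisimple_iff (ad ℂ L s) _ θ.toLinearEquiv ?_).mp hs
    ext y
    exact LieEquiv.map_lie θ s y
  have hθn : IsNilpotent (ad ℂ L (θ n)) := by
    rw [conj]
    exact hn.map _
  have comm : ∀ x y : L, ⁅x, y⁆ = 0 → Commute (ad ℂ L x) (ad ℂ L y) := by
    intro x y hxy
    exact LinearMap.ext fun z => by simp [leibniz_lie x y, hxy]
  have hns : ⁅n, s⁆ = 0 := by rw [← lie_skew, hsn, neg_zero]
  obtain ⟨h1, h2⟩ := End.isNilpotent_isSemisimple_unique hθn hθs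
    (n₂ := ad ℂ L (a • n)) (s₂ := ad ℂ L (a • s))
    (by rw [map_smul]; exact hn.smul a)
    (by rw [map_smul]; exact End.IsSemisimple_smul a hs)
    (comm _ _ (by rw [← LieEquiv.map_lie, hns, map_zero])) (comm _ _ (by simp [hns]))
    (by rw [← map_add, ← map_add, ← map_add, ← smul_add, add_comm n s, h])
  have inj : ∀ x y : L, ad ℂ L x = ad ℂ L y → x = y := fun x y hxy =>
    sub_eq_zero.mp (eq_zero_of_forall_lie fun z => by
      simpa [sub_eq_zero] using LinearMap.congr_fun hxy z)
  exact ⟨inj _ _ h2, inj _ _ h1⟩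

end GradingAutomorphism

section Splitting

open Module LieAlgebra

variable {L : Type*} [LieRing L] [LieAlgebra ℂ L]

/-- An `sl₂`-triple `(e, h, f)` whose weights are bounded by `m` and such that no nonzero element of
weight zero centralizes `e`. -/
structure DistinguishedTriple (e h f : L) (m : ℕ) : Prop where
  weight_e : HasWeight h 2 e
  weight_f : HasWeight h (-2) f
  lie_e_f : ⁅e, f⁆ = h
  weight_le : ∀ (j : ℤ) (x : L), HasWeight h j x → x ≠ 0 → -m ≤ j ∧ j ≤ m
  eq_zero_of_weight_zero : ∀ y : L, ⁅e, y⁆ = 0 → HasWeight h 0 y → y = 0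

/-- A decomposition of the triple `(e, h, f)` into two commuting triples `(es, h - t, fs)` and
`(en, t, fn)` such that `es + w` and `en` are the Jordan components of `e + w`. -/
structure JordanSplitting (e h f w es fs en t fn : L) : Prop where
  e_eq : e = es + en
  f_eq : f = fs + fn
  weight_es : HasWeight h 2 es
  weight_en : HasWeight h 2 en
  weight_t : HasWeight h 0 t
  weight_fs : HasWeight h (-2) fs
  weight_fn : HasWeight h (-2) fn
  lie_es_en : ⁅es, en⁆ = 0
  lie_en_fn : ⁅en, fn⁆ = t
  lie_t_en : ⁅t, en⁆ = (2 : ℂ) • en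
  lie_t_fn : ⁅t, fn⁆ = -((2 : ℂ) • fn)
  lie_es_fs : ⁅es, fs⁆ = h - t
  lie_t_es : ⁅t, es⁆ = 0
  lie_t_fs : ⁅t, fs⁆ = 0
  lie_es_fn : ⁅es, fn⁆ = 0
  lie_en_fs : ⁅en, fs⁆ = 0
  lie_fs_fn : ⁅fs, fn⁆ = 0
  lie_t_w : ⁅t, w⁆ = 0
  lie_en_w : ⁅en, w⁆ = 0
  lie_fn_w : ⁅fn, w⁆ = 0
  lie_fs_w : ⁅fs, w⁆ = 0
  isSemisimple : (ad ℂ L (es + w)).IsSemisimple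
  lie_eq_zero : ∀ x : L, ⁅e + w, x⁆ = 0 → ⁅es + w, x⁆ = 0

lemma DistinguishedTriple.sl2Relations {e h f : L} {m : ℕ} (D : DistinguishedTriple e h f m) :
    Sl2Relations (ad ℂ L e) (ad ℂ L h) (ad ℂ L f) :=
  sl2Relations_ad (by simpa [HasWeight] using D.weight_e) (by simpa [HasWeight] using D.weight_f)
    D.lie_e_f

namespace DistinguishedTriple

variable [FiniteDimensional ℂ L] {e h f : L} {m : ℕ} (D : DistinguishedTriple e h f m)
include D

lemma iSup_eigenspace_eq_top : ⨆ j : ℤ, (ad ℂ L h).eigenspace (j : ℂ) = ⊤ :=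
  D.sl2Relations.iSup_eigenspace_eq_top

lemma weightPart_eq_zero {j : ℤ} (hj : j < -m ∨ m < j) (x : L) : weightPart h j x = 0 := by
  by_contra hne
  have := D.weight_le j _ (hasWeight_weightPart D.iSup_eigenspace_eq_top j x) hne
  omega

omit [FiniteDimensional ℂ L] in
lemma eq_zero {j : ℤ} {x : L} (hx : HasWeight h j x) (hj : j < -m ∨ m < j) : x = 0 := by
  by_contra hne
  have := D.weight_le j _ hx hne
  omega

/-- `ad e` is injective on vectors of nonpositive weight. -/
lemma eq_zero_of_lie_eq_zero {j : ℤ} {x : L} (hx : HasWeight h j x) (hj : j ≤ 0)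
    (hex : ⁅e, x⁆ = 0) : x = 0 := by
  by_contra hne
  obtain ⟨n, hn⟩ := D.sl2Relations.exists_weight_eq (x := x) hex hx hne
  have hjn : j = n := by exact_mod_cast hn
  have h0 : j = 0 := by omega
  subst h0
  exact hne (D.eq_zero_of_weight_zero x hex hx)

variable [IsKilling ℂ L]

lemma exists_jordanSplitting (hm : 1 ≤ m) {w : L} (hw : HasWeight h (-m) w) :
    ∃ es fs en t fn : L, JordanSplitting e h f w es fs en t fn := by
  have hH := D.iSup_eigenspace_eq_top
  obtain ⟨s, n, hc, hsn, hss, hn, hker⟩ := exists_jordan_decomposition (e + w)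
  have hζ := Complex.isPrimitiveRoot_exp (m + 2) (by omega)
  set ζ := Complex.exp (2 * Real.pi * Complex.I / (m + 2 : ℕ)) with hζ_def
  have hζ0 : ζ ≠ 0 := hζ.ne_zero (by omega)
  obtain ⟨θ, hθ⟩ := exists_gradingAut hH hζ0
  have hθc : θ (e + w) = ζ ^ 2 • (e + w) := by
    have : ζ ^ (-m : ℤ) = ζ ^ 2 := by
      have h1 := hζ.pow_eq_one
      rw [pow_add] at h1
      rw [zpow_neg, zpow_natCast]
      exact inv_eq_of_mul_eq_one_right h1
    rw [map_add, hθ 2 e D.weight_e, hθ _ w hw, this, smul_add]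
    norm_cast
  rw [hc] at hθc
  obtain ⟨hθs, hθn⟩ := map_eq_smul_of_jordan hsn hss hn θ hθc
  obtain ⟨es, ws, hes, hws, rfl⟩ := exists_homogeneous_of_gradingAut hH D.weight_le hζ hθ hθs
  obtain ⟨en, wn, hen, hwn, rfl⟩ := exists_homogeneous_of_gradingAut hH D.weight_le hζ hθ hθn
  have split : ∀ {i j : ℤ} {a b : L}, HasWeight h i a → HasWeight h j b → i ≠ j → a + b = 0 →
      a = 0 ∧ b = 0 := by
    intro i j a b ha hb hij hab
    have h1 : a = -b := eq_neg_of_add_eq_zero_left hab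
    have h2 : a = 0 := ha.eq_zero (h1 ▸ hb.neg) hij
    exact ⟨h2, by simpa [h2] using hab⟩
  obtain ⟨he_eq, hw_eq⟩ := split ((D.weight_e.sub hes).sub hen) ((hw.sub hws).sub hwn)
    (by omega) (by rw [← sub_eq_zero] at hc; rw [← hc]; abel)
  have he_eq : e = es + en := by rw [sub_sub, sub_eq_zero] at he_eq; exact he_eq
  have hw_eq : w = ws + wn := by rw [sub_sub, sub_eq_zero] at hw_eq; exact hw_eq
  have hww : ⁅ws, wn⁆ = 0 := D.eq_zero (hws.lie hwn) (by omega)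
  have hmix : HasWeight h (2 - m) (⁅es, wn⁆ + ⁅ws, en⁆) :=
    (hes.lie hwn).add (by simpa [sub_eq_add_neg, add_comm] using hws.lie hen)
  obtain ⟨hesen, hmix0⟩ := split (hes.lie hen) hmix (by omega) (by
    rw [← hsn, lie_add, add_lie, add_lie, hww]; abel)
  -- the nilpotent part is orthogonal to the centralizer
  obtain ⟨u, hu⟩ : ∃ u, ⁅e + w, u⁆ = en + wn := by
    refine exists_lie_eq_of_orthogonal fun y hy => ?_
    have hsy := hker 1 y (by simpa using hy)
    have hny : ⁅en + wn, y⁆ = 0 := by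
      rw [hc, add_lie, hsy, zero_add] at hy
      exact hy
    have hcomm : Commute (ad ℂ L (en + wn)) (ad ℂ L y) :=
      LinearMap.ext fun z => by
        have := leibniz_lie (en + wn) y z
        rw [hny, zero_lie, zero_add] at this
        exact this
    rw [killingForm_apply_apply]
    exact (LinearMap.isNilpotent_trace_of_isNilpotent (hcomm.isNilpotent_mul_right hn)).eq_zero
  have hwp : ∀ {j : ℤ}, (j < -m ∨ m < j) → ∀ x, weightPart h j x = 0 :=
    fun hj x => D.weightPart_eq_zero hj x
  obtain ⟨t, ht0, hte, htw⟩ : ∃ t, HasWeight h 0 t ∧ ⁅e, t⁆ = -((2 : ℂ) • en) ∧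
      ⁅w, t⁆ = -((2 : ℂ) • wn) := by
    refine ⟨(-2 : ℂ) • weightPart h 0 u, (hasWeight_weightPart hH 0 u).smul _, ?_, ?_⟩
    · have h1 := congrArg (weightPart h 2) hu
      rw [add_lie, map_add, map_add, hen.weightPart_self, hwn.weightPart_of_ne (by omega)] at h1
      have h2 := weightPart_lie hH D.weight_e 0 u
      have h3 := weightPart_lie hH hw (m + 2) u
      rw [hwp (j := m + 2) (by omega), lie_zero] at h3
      rw [show (-m + (m + 2) : ℤ) = 2 by omega] at h3
      rw [h3, add_zero] at h1
      rw [lie_smul, ← h2, add_zero 2, h1]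
      module
    · have h1 := congrArg (weightPart h (-m)) hu
      rw [add_lie, map_add, map_add, hwn.weightPart_self, hen.weightPart_of_ne (by omega)] at h1
      have h2 := weightPart_lie hH hw 0 u
      have h3 := weightPart_lie hH D.weight_e (-m - 2) u
      rw [hwp (j := -m - 2) (by omega), lie_zero] at h3
      rw [show (2 + (-m - 2) : ℤ) = -m by omega] at h3
      rw [h3, zero_add] at h1
      rw [lie_smul, ← h2, add_zero (-(m : ℤ)), h1]
      module
  have hst : ⁅es + ws, t⁆ = 0 := by
    have hct : ⁅e + w, t⁆ = -((2 : ℂ) • (en + wn)) := by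
      rw [add_lie, hte, htw, smul_add, neg_add]
    refine hker 2 t ?_
    simp only [pow_two, End.mul_apply, ad_apply]
    rw [hct, hc, lie_neg, lie_smul, add_lie, hsn, lie_self]
    simp
  rw [add_lie] at hst
  obtain ⟨hest, hwst⟩ := split (hes.lie ht0) (hws.lie ht0) (by omega) hst
  have hent : ⁅en, t⁆ = -((2 : ℂ) • en) := by
    rw [← hte, he_eq, add_lie, hest, zero_add]
  have hwnt : ⁅wn, t⁆ = -((2 : ℂ) • wn) := by
    rw [← htw, hw_eq, add_lie, hwst, zero_add]
  have heen : ⁅e, en⁆ = 0 := by rw [he_eq, add_lie, hesen, lie_self, zero_add]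
  have henh : ⁅en, h⁆ = -((2 : ℂ) • en) := by
    rw [← lie_skew, hen]
    norm_num
  have hht : ⁅h, t⁆ = 0 := by simpa [HasWeight] using ht0
  have hth : ⁅t, h⁆ = 0 := by rw [← lie_skew, hht, neg_zero]
  have ht_eq : ⁅en, f⁆ = t := by
    refine (sub_eq_zero.mp (D.eq_zero_of_weight_zero (t - ⁅en, f⁆) ?_
      (ht0.sub (hen.lie D.weight_f)))).symm
    rw [lie_sub, hte, leibniz_lie, heen, zero_lie, D.lie_e_f, henh]
    simp
  obtain ⟨fn, hfn⟩ : ∃ fn, fn = (-1 / 2 : ℂ) • ⁅t, f⁆ := ⟨_, rfl⟩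
  have htf : ⁅t, f⁆ = -((2 : ℂ) • fn) := by rw [hfn, smul_smul]; norm_num
  have hfnw : HasWeight h (-2) fn := by
    rw [hfn]
    exact (ht0.lie D.weight_f).smul _
  have hefn : ⁅e, fn⁆ = t := by
    rw [hfn, lie_smul, leibniz_lie, hte, D.lie_e_f, hth, neg_lie, smul_lie, ht_eq]
    module
  have henfn : ⁅en, fn⁆ = t := by
    rw [hfn, lie_smul, leibniz_lie, hent, neg_lie, smul_lie, ht_eq, lie_self]
    module
  have hesfn : ⁅es, fn⁆ = 0 := by
    rw [he_eq, add_lie, henfn] at hefn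
    simpa using hefn
  have hhfn : ⁅h, fn⁆ = -((2 : ℂ) • fn) := by simpa [HasWeight] using hfnw
  have htfn : ⁅t, fn⁆ = -((2 : ℂ) • fn) := by
    refine sub_eq_zero.mp (D.eq_zero_of_lie_eq_zero (j := -2) (x := ⁅t, fn⁆ - -((2 : ℂ) • fn))
      ((ht0.lie hfnw).sub (hfnw.smul 2).neg) (by omega) ?_)
    rw [lie_sub, leibniz_lie, hte, hefn, lie_self, lie_neg, lie_smul, hefn, neg_lie, smul_lie,
      henfn]
    module
  have htfs : ⁅t, f - fn⁆ = 0 := by rw [lie_sub, htf, htfn, sub_self]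
  have hefs : ⁅e, f - fn⁆ = h - t := by rw [lie_sub, D.lie_e_f, hefn]
  have hfsw : HasWeight h (-2) (f - fn) := D.weight_f.sub hfnw
  have hfsfn : ⁅f - fn, fn⁆ = 0 := by
    refine D.eq_zero_of_lie_eq_zero (hfsw.lie hfnw) (by omega) ?_
    rw [leibniz_lie, hefs, hefn, ← lie_skew _ t, htfs, sub_lie, hhfn, htfn]
    simp
  have hten : ⁅t, en⁆ = (2 : ℂ) • en := by rw [← lie_skew, hent, neg_neg]
  have hwn0 : wn = 0 := by
    by_contra hne
    obtain ⟨k, hk⟩ := (sl2Relations_ad hten htfn henfn).flip.exists_weight_eq (x := wn) (a := -2)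
      (D.eq_zero (hfnw.lie hwn) (by omega)) (by simp [← lie_skew t wn, hwnt]) hne
    have : (-2 : ℤ) = k := by exact_mod_cast hk
    omega
  subst hwn0
  rw [add_zero] at hw_eq
  subst hw_eq
  refine ⟨es, f - fn, en, t, fn, he_eq, by abel, hes, hen, ht0, hfsw, hfnw, hesen, henfn, hten,
    htfn, ?_, ?_, htfs, hesfn, ?_, hfsfn, ?_, ?_, ?_, ?_, hss, fun x hx => ?_⟩
  · rw [lie_sub, hesfn, sub_zero, ← D.lie_e_f, ← ht_eq, he_eq, add_lie, add_sub_cancel_right]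
  · rw [← lie_skew, hest, neg_zero]
  · rw [lie_sub, ht_eq, henfn, sub_self]
  · rw [← lie_skew, hwst, neg_zero]
  · rw [← lie_skew, neg_eq_zero]
    simpa using hmix0
  · exact D.eq_zero (hfnw.lie hw) (by omega)
  · exact D.eq_zero (hfsw.lie hw) (by omega)
  · exact hker 1 x (by simpa using hx)

end DistinguishedTriple

end Splitting

section Core

open Module LieAlgebra

/-- A version of `Sl2Relations.eq_top_of_ker_le` on an invariant subspace. -/
lemma Sl2Relations.le_of_ker_inf_le {M : Type*} [AddCommGroup M] [Module ℂ M]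
    [FiniteDimensional ℂ M] {E H F : End ℂ M} (r : Sl2Relations E H F) {Q N : Submodule ℂ M}
    (hE : ∀ x ∈ Q, E x ∈ Q) (hH : ∀ x ∈ Q, H x ∈ Q) (hF : ∀ x ∈ Q, F x ∈ Q)
    (hN : ∀ x ∈ N, F x ∈ N) (hker : Q ⊓ LinearMap.ker E ≤ N) : Q ≤ N := by
  have r' : Sl2Relations (E.restrict hE) (H.restrict hH) (F.restrict hF) :=
    ⟨fun x => Subtype.ext (r.lie_h_e x), fun x => Subtype.ext (r.lie_h_f x),
      fun x => Subtype.ext (r.lie_e_f x)⟩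
  rw [← Submodule.comap_subtype_eq_top]
  refine r'.eq_top_of_ker_le (fun x hx => hN x hx) fun x hx => hker ⟨x.2, ?_⟩
  exact congrArg Subtype.val (LinearMap.mem_ker.mp hx)

lemma _root_.Module.End.IsSemisimple.ker_sup_range {M : Type*} [AddCommGroup M] [Module ℂ M]
    [FiniteDimensional ℂ M] {S : End ℂ M} (hS : S.IsSemisimple) :
    LinearMap.ker S ⊔ LinearMap.range S = ⊤ := by
  have hd : LinearMap.ker S ⊓ LinearMap.range S = ⊥ := by
    rw [eq_bot_iff]
    rintro _ ⟨hx, y, rfl⟩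
    exact hS.apply_eq_zero_of_pow_apply_eq_zero (n := 2) (by rw [pow_two]; exact hx)
  have h1 := Submodule.finrank_sup_add_finrank_inf_eq (LinearMap.ker S) (LinearMap.range S)
  have h2 := S.finrank_range_add_finrank_ker
  rw [hd, finrank_bot] at h1
  refine Submodule.eq_top_of_finrank_eq ?_
  omega

variable {L : Type*} [LieRing L] [LieAlgebra ℂ L]

lemma HasWeight.pow_lie {h x y : L} {i j : ℤ} (hx : HasWeight h i x) (hy : HasWeight h j y)
    (n : ℕ) : HasWeight h (n * i + j) (((ad ℂ L x) ^ n) y) := by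
  induction n with
  | zero => simpa using hy
  | succ n ih =>
    rw [pow_succ', End.mul_apply, show ((n + 1 : ℕ) * i + j : ℤ) = i + (n * i + j) by
      push_cast; ring]
    exact hx.lie ih

lemma lie_pow_lie {x y z : L} (hxy : ⁅x, y⁆ = 0) (n : ℕ) :
    ⁅x, ((ad ℂ L y) ^ n) z⁆ = ((ad ℂ L y) ^ n) ⁅x, z⁆ := by
  induction n with
  | zero => simp
  | succ n ih =>
    rw [pow_succ', End.mul_apply, End.mul_apply, ad_apply, ad_apply, leibniz_lie, hxy, zero_lie,
      zero_add, ih]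

variable {e h f w es fs en t fn v : L} {m k : ℕ}

lemma HasWeight.eq_zero_of_add {i j : ℤ} {a b : L} (ha : HasWeight h i a) (hb : HasWeight h j b)
    (hij : i ≠ j) (hab : a + b = 0) : a = 0 := by
  have h1 : a = -b := eq_neg_of_add_eq_zero_left hab
  exact ha.eq_zero (h1 ▸ hb.neg) hij

namespace JordanSplitting

variable (S : JordanSplitting e h f w es fs en t fn)
include S

lemma sl2Relations_nilpotent : Sl2Relations (ad ℂ L en) (ad ℂ L t) (ad ℂ L fn) :=
  sl2Relations_ad S.lie_t_en S.lie_t_fn S.lie_en_fn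

lemma sl2Relations_semisimple : Sl2Relations (ad ℂ L es) (ad ℂ L (h - t)) (ad ℂ L fs) := by
  refine sl2Relations_ad ?_ ?_ S.lie_es_fs
  · rw [sub_lie, S.lie_t_es, sub_zero, S.weight_es]
    norm_num
  · rw [sub_lie, S.lie_t_fs, sub_zero, S.weight_fs]
    norm_num

lemma lie_add_t : ⁅es + w, t⁆ = 0 := by
  rw [add_lie, ← lie_skew, S.lie_t_es, ← lie_skew, S.lie_t_w]
  simp

variable [FiniteDimensional ℂ L] (D : DistinguishedTriple e h f m) (hw : HasWeight h (-m) w)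
  (hcent : ∀ y : L, ⁅e, y⁆ = 0 → ⁅v, y⁆ = 0)
include D hw hcent

/-- A central vector `v` of weight `k` for which the pairing with `w` degenerates commutes with
`w` and with the triple complementary to `(en, t, fn)`. -/
lemma lie_eq_zero_of_degenerate [IsKilling ℂ L] (hkm : k ≤ m) (hv : HasWeight h k v)
    (hev : ⁅e, v⁆ = 0) (hbad : ∀ x : L, ⁅e, x⁆ = 0 → killingForm ℂ L w ⁅⁅f, v⁆, x⁆ = 0) :
    ⁅v, w⁆ = 0 ∧ ⁅es, v⁆ = 0 ∧ ⁅en, v⁆ = 0 ∧ ⁅fs, v⁆ = 0 ∧ ⁅t, v⁆ = (k : ℂ) • v := by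
  have hH := D.iSup_eigenspace_eq_top
  obtain ⟨u, hu⟩ : ∃ u, ⁅e, u⁆ = ⁅v, w⁆ := exists_lie_eq_of_orthogonal fun y hy => by
    rw [← lie_skew, map_neg, LinearMap.neg_apply, killingForm_lie_left, hcent y hy, map_zero,
      neg_zero]
  obtain ⟨a, ha, hea⟩ : ∃ a, HasWeight h (k - m - 2) a ∧ ⁅e, a⁆ = ⁅v, w⁆ := by
    refine ⟨weightPart h (k - m - 2) u, hasWeight_weightPart hH _ u, ?_⟩
    rw [← weightPart_lie hH D.weight_e, hu, show (2 + (k - m - 2) : ℤ) = k + -m by omega]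
    exact (hv.lie hw).weightPart_self
  have hwa : ⁅w, a⁆ = 0 := D.eq_zero (hw.lie ha) (by omega)
  have hwv : ⁅w, v⁆ = -⁅v, w⁆ := (lie_skew w v).symm
  have hsva := S.lie_eq_zero (v + a) (by
    rw [add_lie, lie_add, lie_add, hev, hea, hwa, hwv]; abel)
  have hsva' := hsva
  rw [add_lie, lie_add, lie_add, hwa, add_zero, hwv, add_assoc] at hsva'
  have hesa_w : HasWeight h (k - m) ⁅es, a⁆ := by
    convert S.weight_es.lie ha using 1
    ring
  have hvw_w : HasWeight h (k - m) ⁅v, w⁆ := hv.lie hw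
  have hesv : ⁅es, v⁆ = 0 :=
    (S.weight_es.lie hv).eq_zero_of_add (hesa_w.add hvw_w.neg) (by omega) hsva'
  have hesa : ⁅es, a⁆ = ⁅v, w⁆ := by
    rw [hesv, zero_add] at hsva'
    exact add_neg_eq_zero.mp hsva'
  have henv : ⁅en, v⁆ = 0 := by
    rw [S.e_eq, add_lie, hesv, zero_add] at hev
    exact hev
  have hena : ⁅en, a⁆ = 0 := by
    rw [S.e_eq, add_lie, hesa] at hea
    simpa using hea
  have hfw : ⁅f, w⁆ = 0 := by rw [S.f_eq, add_lie, S.lie_fs_w, S.lie_fn_w, add_zero]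
  obtain ⟨b', hb'⟩ : ∃ u, ⁅e, u⁆ = a := exists_lie_eq_of_orthogonal fun x hx => by
    have h1 : ⁅f, ⁅v, w⁆⁆ = ⁅⁅f, v⁆, w⁆ := by rw [leibniz_lie f v w, hfw, lie_zero, add_zero]
    have h2 : ⁅f, ⁅e, a⁆⁆ = (m + 2 - k : ℂ) • a + ⁅e, ⁅f, a⁆⁆ := by
      rw [leibniz_lie f e a, ← lie_skew f e, D.lie_e_f, neg_lie, ha]
      push_cast
      module
    have h3 := congrArg (fun z => killingForm ℂ L z x) (h2.symm.trans (hea ▸ h1))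
    simp only [map_add, LinearMap.add_apply, map_smul, LinearMap.smul_apply, smul_eq_mul] at h3
    rw [killingForm_lie_left' e, hx, map_zero, neg_zero, add_zero, ← lie_skew, map_neg,
      LinearMap.neg_apply, killingForm_lie_left, hbad x hx, neg_zero] at h3
    refine (mul_eq_zero.mp h3).resolve_left ?_
    have : ((m + 2 - k : ℤ) : ℂ) ≠ 0 := Int.cast_ne_zero.mpr (by omega)
    exact_mod_cast this
  obtain ⟨b, hb, heb⟩ : ∃ b, HasWeight h (k - m - 4) b ∧ ⁅e, b⁆ = a := by
    refine ⟨weightPart h (k - m - 4) b', hasWeight_weightPart hH _ b', ?_⟩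
    rw [← weightPart_lie hH D.weight_e, hb', show (2 + (k - m - 4) : ℤ) = k - m - 2 by omega]
    exact ha.weightPart_self
  have heen : ⁅e, en⁆ = 0 := by rw [S.e_eq, add_lie, S.lie_es_en, lie_self, add_zero]
  have henb : ⁅en, b⁆ = 0 := by
    refine D.eq_zero_of_lie_eq_zero (S.weight_en.lie hb) (by omega) ?_
    rw [leibniz_lie, heen, zero_lie, zero_add, heb, hena]
  have hesb : ⁅es, b⁆ = a := by
    rw [S.e_eq, add_lie, henb, add_zero] at heb
    exact heb
  have hwb : ⁅w, b⁆ = 0 := D.eq_zero (hw.lie hb) (by omega)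
  have hwfs : ⁅w, fs⁆ = 0 := by rw [← lie_skew, S.lie_fs_w, neg_zero]
  -- `(k - t) (v + a)` lies in the kernel and in the range of `ad (es + w)`
  have hψ : (k : ℂ) • (v + a) - ⁅t, v + a⁆ = 0 := by
    have hsψ : ⁅es + w, (k : ℂ) • (v + a) - ⁅t, v + a⁆⁆ = 0 := by
      rw [lie_sub, lie_smul, leibniz_lie _ t, S.lie_add_t, hsva]
      simp
    have e1 : (k : ℂ) • v - ⁅t, v⁆ = ⁅es, ⁅fs, v⁆⁆ := by
      rw [leibniz_lie es fs v, hesv, lie_zero, add_zero, S.lie_es_fs, sub_lie, hv]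
      simp
    have e2 : (k : ℂ) • a - ⁅t, a⁆ = ⁅h - t, a⁆ + (m + 2 : ℂ) • a := by
      rw [sub_lie, ha]
      push_cast
      module
    have e3 : ⁅w, ⁅fs, v⁆⁆ = ⁅h - t, a⁆ - ⁅es, ⁅fs, a⁆⁆ := by
      rw [leibniz_lie w fs v, hwfs, zero_lie, zero_add, hwv, lie_neg, ← hesa, leibniz_lie es fs a,
        S.lie_es_fs, leibniz_lie fs es a, ← lie_skew fs es, S.lie_es_fs, neg_lie, leibniz_lie es fs,
        S.lie_es_fs]
      abel
    have e4 : ⁅w, ⁅fs, a⁆⁆ = 0 := by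
      rw [leibniz_lie w fs a, hwfs, hwa]
      simp
    obtain ⟨q, hq⟩ := exists_lie_eq_of_orthogonal (x := es + w)
      (w := (k : ℂ) • (v + a) - ⁅t, v + a⁆) fun y hy => by
        have hy' : ⁅es, y⁆ = -⁅w, y⁆ := by rwa [add_lie, add_eq_zero_iff_eq_neg] at hy
        have swap : ∀ x : L, killingForm ℂ L ⁅es, x⁆ y = -killingForm ℂ L ⁅w, x⁆ y := fun x => by
          rw [killingForm_lie_left', killingForm_lie_left', hy', map_neg]
        have e5 : (k : ℂ) • (v + a) - ⁅t, v + a⁆ =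
            ⁅es, ⁅fs, v⁆⁆ + (⁅h - t, a⁆ + (m + 2 : ℂ) • ⁅es, b⁆) := by
          rw [hesb, ← e1, ← e2, lie_add, smul_add]
          abel
        rw [e5]
        simp only [map_add, LinearMap.add_apply, map_smul, LinearMap.smul_apply]
        rw [swap, swap, hwb, e3]
        simp only [map_sub, LinearMap.sub_apply]
        rw [swap, e4]
        simp
    rw [← hq]
    refine S.isSemisimple.apply_eq_zero_of_pow_apply_eq_zero (n := 2) ?_
    rw [pow_two, End.mul_apply, ad_apply, ad_apply, hq, hsψ]
  have hψ' : ((k : ℂ) • v - ⁅t, v⁆) + ((k : ℂ) • a - ⁅t, a⁆) = 0 := by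
    rw [← hψ, lie_add, smul_add]
    abel
  have htw_v : HasWeight h k ⁅t, v⁆ := by simpa using S.weight_t.lie hv
  have htw_a : HasWeight h (k - m - 2) ⁅t, a⁆ := by simpa using S.weight_t.lie ha
  have htv : (k : ℂ) • v - ⁅t, v⁆ = 0 :=
    ((hv.smul _).sub htw_v).eq_zero_of_add ((ha.smul _).sub htw_a) (by omega) hψ'
  have hta : ⁅t, a⁆ = (k : ℂ) • a := by
    rw [htv, zero_add] at hψ'
    exact (sub_eq_zero.mp hψ').symm
  have ha0 : a = 0 := by
    by_contra hne
    exact S.sl2Relations_nilpotent.pow_f_ne_zero hena hta hne le_rfl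
      (D.eq_zero (S.weight_fn.pow_lie ha k) (by omega))
  refine ⟨by rw [← hea, ha0, lie_zero], hesv, henv, ?_, (sub_eq_zero.mp htv).symm⟩
  simpa using S.sl2Relations_semisimple.pow_f_eq_zero (x := v) (n := 0) hesv (by
    rw [ad_apply, sub_lie, hv, ← sub_eq_zero.mp htv]
    simp)

/-- If `v` commutes with `w`, `en`, `fs`, then `ad w` vanishes on the range of `ad v`. -/
lemma lie_lie_eq_zero (hvw : ⁅v, w⁆ = 0) (henv : ⁅en, v⁆ = 0)
    (hfsv : ⁅fs, v⁆ = 0) (htv : ⁅t, v⁆ = (k : ℂ) • v) (y : L) : ⁅w, ⁅v, y⁆⁆ = 0 := by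
  have hH := D.iSup_eigenspace_eq_top
  have rn := S.sl2Relations_nilpotent
  have rs := S.sl2Relations_semisimple
  have hT := rn.iSup_eigenspace_eq_top
  let N : Submodule ℂ L := LinearMap.ker (ad ℂ L w ∘ₗ ad ℂ L v)
  have comm : ∀ {a b c : L}, ⁅a, b⁆ = 0 → ⁅a, ⁅b, c⁆⁆ = ⁅b, ⁅a, c⁆⁆ := by
    intro a b c hab
    rw [leibniz_lie, hab, zero_lie, zero_add]
  have hN : ∀ a : L, ⁅a, v⁆ = 0 → ⁅a, w⁆ = 0 → ∀ x ∈ N, ⁅a, x⁆ ∈ N := by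
    intro a hav haw x hx
    change ⁅w, ⁅v, ⁅a, x⁆⁆⁆ = 0
    rw [← comm hav, ← comm haw, show ⁅w, ⁅v, x⁆⁆ = 0 from hx, lie_zero]
  have stable : ∀ {a b : L} {c : ℂ}, ⁅a, b⁆ = c • b → ∀ x ∈ LinearMap.ker (ad ℂ L b),
      ⁅a, x⁆ ∈ LinearMap.ker (ad ℂ L b) := by
    intro a b c hab x hx
    have hx : ⁅b, x⁆ = 0 := hx
    change ⁅b, ⁅a, x⁆⁆ = 0
    rw [leibniz_lie, ← lie_skew b a, hab, hx, neg_lie, smul_lie, hx]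
    simp
  have hfnes : ⁅fn, es⁆ = (0 : ℂ) • es := by rw [← lie_skew, S.lie_es_fn, neg_zero, zero_smul]
  have henes : ⁅en, es⁆ = (0 : ℂ) • es := by rw [← lie_skew, S.lie_es_en, neg_zero, zero_smul]
  have htes : ⁅t, es⁆ = (0 : ℂ) • es := by rw [S.lie_t_es, zero_smul]
  have htfn : ⁅t, fn⁆ = (-2 : ℂ) • fn := by rw [S.lie_t_fn, neg_smul]
  suffices N = ⊤ from (this ▸ Submodule.mem_top : y ∈ N)
  refine rs.eq_top_of_ker_le (hN fs hfsv S.lie_fs_w) ?_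
  refine rn.flip.le_of_ker_inf_le (stable hfnes) (fun x hx => ?_) (stable henes)
    (hN en henv S.lie_en_w) ?_
  · exact neg_mem (stable htes x hx)
  refine End.le_of_forall_weight hH (fun x hx => ⟨stable S.weight_es x hx.1,
    stable S.weight_fn x hx.2⟩) fun j x hx hxj => ?_
  refine End.le_of_forall_weight hT (Q := (LinearMap.ker (ad ℂ L es) ⊓ LinearMap.ker (ad ℂ L fn)) ⊓
    (ad ℂ L h).eigenspace (j : ℂ)) (fun x hx => ⟨⟨stable htes x hx.1.1,
    stable htfn x hx.1.2⟩, ?_⟩) ?_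
    ⟨hx, End.mem_eigenspace_iff.mpr hxj⟩
  · have hx2 : ⁅h, x⁆ = (j : ℂ) • x := End.mem_eigenspace_iff.mp hx.2
    have ht0 : ⁅h, t⁆ = 0 := by simpa [HasWeight] using S.weight_t
    refine End.mem_eigenspace_iff.mpr ?_
    rw [ad_apply, ad_apply, comm ht0, hx2, lie_smul]
  rintro l z ⟨⟨hesz, hfnz⟩, hz⟩ hzl
  have hzh : HasWeight h j z := End.mem_eigenspace_iff.mp hz
  clear hz
  by_cases hz0 : z = 0
  · rw [hz0]
    exact zero_mem _
  obtain ⟨b, hb⟩ := rn.flip.exists_weight_eq hfnz (a := -l) (by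
    rw [LinearMap.neg_apply, hzl, neg_smul]) hz0
  have hhz : (ad ℂ L (h - t)) z = ((j : ℂ) - l) • z := by
    rw [map_sub, LinearMap.sub_apply, hzl, ad_apply, hzh, sub_smul]
  obtain ⟨a, ha⟩ := rs.exists_weight_eq hesz hhz hz0
  have hlb : l = -b := by
    have : -l = (b : ℤ) := by exact_mod_cast hb
    omega
  have hja : j - l = a := by exact_mod_cast ha
  change ⁅w, ⁅v, z⁆⁆ = 0
  rcases lt_or_ge a b with hab | hab
  · rw [comm (by rw [← lie_skew, hvw, neg_zero]), D.eq_zero (hw.lie hzh) (by omega), lie_zero]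
  suffices hvz : ⁅v, z⁆ = 0 by rw [hvz, lie_zero]
  rw [ha] at hhz
  have henfs : ⁅en, fs⁆ = 0 := S.lie_en_fs
  -- a vector of the centralizer of `e` with lowest component `z`
  let c : ℕ → ℂ := Nat.rec 1 fun r c => -c / ((r + 1) * (a - r))
  have hc : ∀ r < b, c (r + 1) * ((r + 1) * (a - r)) = -c r := by
    intro r hr
    refine div_mul_cancel₀ _ (mul_ne_zero (Nat.cast_add_one_ne_zero r) (sub_ne_zero.mpr ?_))
    exact_mod_cast (show a ≠ r by omega)
  have hesn : ∀ r : ℕ, ⁅es, ((ad ℂ L en) ^ r) z⁆ = 0 := fun r => by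
    rw [lie_pow_lie S.lie_es_en, show ⁅es, z⁆ = 0 from hesz, map_zero]
  have hhn : ∀ r : ℕ, (ad ℂ L (h - t)) (((ad ℂ L en) ^ r) z) = (a : ℂ) • ((ad ℂ L en) ^ r) z := by
    intro r
    rw [ad_apply, lie_pow_lie, ← ad_apply ℂ L, hhz, map_smul]
    rw [sub_lie, S.weight_en, S.lie_t_en]
    simp
  have hsum : ∀ n ≤ b, ⁅e, ∑ r ∈ Finset.range (n + 1),
      c r • ((ad ℂ L fs) ^ r) (((ad ℂ L en) ^ r) z)⁆ =
      c n • ((ad ℂ L fs) ^ n) (((ad ℂ L en) ^ (n + 1)) z) := by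
    intro n
    induction n with
    | zero =>
      intro _
      simp [S.e_eq, show ⁅es, z⁆ = 0 from hesz]
    | succ n ih =>
      intro hn
      rw [Finset.sum_range_succ, lie_add, ih (by omega), S.e_eq, add_lie, lie_smul, lie_smul,
        lie_pow_lie henfs, ← ad_apply ℂ L es, rs.e_pow_f _ (by simp [hesn]), hhn, ← sub_smul,
        map_smul, smul_smul, smul_smul, mul_assoc, hc n (by omega), ← ad_apply ℂ L en,
        ← End.mul_apply (ad ℂ L en), ← pow_succ' (ad ℂ L en)]
      simp
  have hX : ⁅e, ∑ r ∈ Finset.range (b + 1),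
      c r • ((ad ℂ L fs) ^ r) (((ad ℂ L en) ^ r) z)⁆ = 0 := by
    rw [hsum b le_rfl, rn.flip.pow_f_eq_zero hfnz (by rw [LinearMap.neg_apply, hzl, ← hb, neg_smul]),
      map_zero, smul_zero]
  have hvX := hcent _ hX
  have hvfs : ⁅v, fs⁆ = 0 := by rw [← lie_skew, hfsv, neg_zero]
  have hven : ⁅v, en⁆ = 0 := by rw [← lie_skew, henv, neg_zero]
  simp only [lie_sum, lie_smul, lie_pow_lie hvfs, lie_pow_lie hven] at hvX
  have hvzt : HasWeight t (k + l) ⁅v, z⁆ :=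
    HasWeight.lie (by simpa [HasWeight] using htv) hzl
  have hp := congrArg (weightPart t (k + l)) hvX
  rw [map_zero, map_sum, Finset.sum_eq_single 0] at hp
  · rw [map_smul, pow_zero, pow_zero, End.one_apply, End.one_apply, hvzt.weightPart_self] at hp
    simpa [c] using hp
  · intro r _ hr
    have hent : HasWeight t 2 en := by simpa [HasWeight] using S.lie_t_en
    have hfst : HasWeight t 0 fs := by simpa [HasWeight] using S.lie_t_fs
    rw [map_smul, (hfst.pow_lie (hent.pow_lie hvzt r) r).weightPart_of_ne (by omega), smul_zero]
  · simp

/-- The pairing with `w ≠ 0` does not degenerate on a nonzero central vector of positive weight. -/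
lemma eq_zero_of_degenerate [IsSimple ℂ L] (hw0 : w ≠ 0) (hkm : k ≤ m)
    (hv : HasWeight h k v) (hev : ⁅e, v⁆ = 0)
    (hbad : ∀ x : L, ⁅e, x⁆ = 0 → killingForm ℂ L w ⁅⁅f, v⁆, x⁆ = 0) : v = 0 := by
  obtain ⟨hvw, hesv, henv, hfsv, htv⟩ := S.lie_eq_zero_of_degenerate D hw hcent hkm hv hev hbad
  have hwv := S.lie_lie_eq_zero D hw hcent hvw henv hfsv htv
  have hsv : ⁅v, es + w⁆ = 0 := by rw [lie_add, hvw, ← lie_skew, hesv, neg_zero, add_zero]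
  have hpow : ∀ (n : ℕ) (y : L), ((ad ℂ L (es + w)) ^ n) ⁅v, y⁆ = ⁅v, ((ad ℂ L es) ^ n) y⁆ := by
    intro n
    induction n with
    | zero => simp
    | succ n ih =>
      intro y
      rw [pow_succ, End.mul_apply, ad_apply, add_lie, hwv, add_zero, leibniz_lie, hesv, zero_lie,
        zero_add, ih, pow_succ, End.mul_apply, ad_apply]
  obtain ⟨n, hn⟩ := S.sl2Relations_semisimple.isNilpotent_e
  have hvs : ∀ y : L, ⁅v, ⁅es + w, y⁆⁆ = 0 := by
    intro y
    rw [leibniz_lie, hsv, zero_lie, zero_add]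
    exact S.isSemisimple.apply_eq_zero_of_pow_apply_eq_zero (n := n) (by rw [hpow, hn]; simp)
  -- the annihilator of the range of `ad (es + w)` is an ideal
  let A : LieIdeal ℂ L :=
    { carrier := {z | ∀ y : L, ⁅z, ⁅es + w, y⁆⁆ = 0}
      add_mem' := fun ha hb y => by rw [add_lie, ha y, hb y, add_zero]
      zero_mem' := fun y => zero_lie _
      smul_mem' := fun c a ha y => by rw [smul_lie, ha y, smul_zero]
      lie_mem := by
        intro x z hz y
        have hz : ∀ y : L, ⁅z, ⁅es + w, y⁆⁆ = 0 := hz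
        obtain ⟨p, hp, _, ⟨q, rfl⟩, rfl⟩ := Submodule.mem_sup.mp
          (S.isSemisimple.ker_sup_range ▸ Submodule.mem_top : x ∈ _)
        have hp : ⁅es + w, p⁆ = 0 := hp
        rw [add_lie, ad_apply, ← lie_skew ⁅es + w, q⁆ z, hz, neg_zero, add_zero, lie_lie, hz,
          lie_zero, zero_sub, leibniz_lie p, ← lie_skew p, hp, neg_zero, zero_lie, zero_add, hz,
          neg_zero] }
  rcases IsSimple.eq_bot_or_eq_top (R := ℂ) A with hA | hA
  · have : v ∈ A := hvs
    rwa [hA, LieSubmodule.mem_bot] at this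
  · exfalso
    have hs : ∀ y : L, ⁅es + w, y⁆ = 0 := fun y => eq_zero_of_forall_lie fun z => by
      have hz : z ∈ A := hA ▸ LieSubmodule.mem_top z
      rw [← lie_skew, show ⁅z, ⁅es + w, y⁆⁆ = 0 from hz y, neg_zero]
    have h0 := eq_zero_of_forall_lie hs
    rw [add_comm] at h0
    exact hw0 (hw.eq_zero_of_add S.weight_es (by omega) h0)

end JordanSplitting

end Core

section Reduction

open Module LieAlgebra

variable {L : Type*} [LieRing L] [LieAlgebra ℂ L] [FiniteDimensional ℂ L]

lemma exists_max_weight [IsKilling ℂ L] {h e : L}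
    (hH : ⨆ j : ℤ, (ad ℂ L h).eigenspace (j : ℂ) = ⊤) (he : HasWeight h 2 e) (he0 : e ≠ 0) :
    ∃ m : ℕ, 1 ≤ m ∧ (∃ x ≠ 0, HasWeight h m x) ∧
      ∀ (j : ℤ) (x : L), HasWeight h j x → x ≠ 0 → -m ≤ j ∧ j ≤ m := by
  let W : Set ℤ := {j | ∃ x : L, x ≠ 0 ∧ HasWeight h j x}
  have hneg : ∀ j ∈ W, -j ∈ W := by
    rintro j ⟨x, hx0, hx⟩
    by_contra hj
    refine hx0 (eq_zero_of_killingForm fun y => ?_)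
    have h0 : weightPart h (-j) y = 0 := by
      by_contra h0
      exact hj ⟨_, h0, hasWeight_weightPart hH (-j) y⟩
    rw [← killingForm_weightPart' hH hx, h0, map_zero]
  have hfin : W.Finite := (ad ℂ L h).weights.finite_toSet.subset fun j ⟨x, hx0, hx⟩ => by
    by_contra hj
    refine hx0 ?_
    rw [← hx.weightPart_self, weightPart, End.weightProj_of_notMem (by simpa using hj),
      LinearMap.zero_apply]
  have h2 : (2 : ℤ) ∈ W := ⟨e, he0, he⟩
  obtain ⟨M, hM, hmax⟩ := hfin.exists_maximal ⟨2, h2⟩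
  have hle : ∀ j ∈ W, j ≤ M := fun j hj => by
    rcases le_total j M with h | h
    exacts [h, hmax hj h]
  have := hle 2 h2
  lift M to ℕ using by omega
  refine ⟨M, by omega, hM, fun j x hx hx0 => ⟨?_, hle j ⟨x, hx0, hx⟩⟩⟩
  have := hle _ (hneg j ⟨x, hx0, hx⟩)
  omega

namespace DistinguishedTriple

variable {e h f : L} {m : ℕ} (D : DistinguishedTriple e h f m)
include D

omit [FiniteDimensional ℂ L] in
lemma lie_mem_centralizer {y : L} (hy : ⁅e, y⁆ = 0) : ⁅e, ⁅h, y⁆⁆ = 0 := by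
  rw [leibniz_lie, ← lie_skew e h, D.weight_e, hy, neg_lie, smul_lie, hy]
  simp

lemma lie_eq_zero_of_weight_max {x : L} (hx : HasWeight h m x) {y : L} (hy : ⁅e, y⁆ = 0) :
    ⁅x, y⁆ = 0 := by
  refine End.le_of_forall_weight D.iSup_eigenspace_eq_top (Q := LinearMap.ker (ad ℂ L e))
    (N := LinearMap.ker (ad ℂ L x)) (fun y hy => D.lie_mem_centralizer hy)
    (fun j y hy hj => ?_) hy
  change ⁅x, y⁆ = 0
  rcases le_or_gt j 0 with h0 | h0
  · rw [D.eq_zero_of_lie_eq_zero hj h0 hy, lie_zero]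
  · exact D.eq_zero (hx.lie hj) (by omega)

lemma exists_lie_lie_eq [IsSimple ℂ L] (hm : 1 ≤ m) {v z : L} (hev : ⁅e, v⁆ = 0)
    (hcent : ∀ y : L, ⁅e, y⁆ = 0 → ⁅v, y⁆ = 0) (hv0 : v ≠ 0) (hz : HasWeight h m z) :
    ∃ x : L, ⁅e, x⁆ = 0 ∧ ⁅⁅f, x⁆, v⁆ = z := by
  have hH := D.iSup_eigenspace_eq_top
  -- the component of lowest weight of `v`
  classical
  obtain ⟨j, hj0, hjmin⟩ : ∃ j, weightPart h j v ≠ 0 ∧ ∀ i < j, weightPart h i v = 0 := by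
    let W : Finset ℤ := (ad ℂ L h).weights.filter fun j => weightPart h j v ≠ 0
    have hW : W.Nonempty := by
      by_contra hW
      refine hv0 ?_
      rw [← (ad ℂ L h).sum_weightProj v]
      refine Finset.sum_eq_zero fun j hj => ?_
      by_contra hne
      exact hW ⟨j, Finset.mem_filter.mpr ⟨hj, hne⟩⟩
    refine ⟨W.min' hW, (Finset.mem_filter.mp (W.min'_mem hW)).2, fun i hi => ?_⟩
    by_contra hne
    refine absurd (W.min'_le i (Finset.mem_filter.mpr ⟨?_, hne⟩)) (not_le.mpr hi)
    by_contra hiW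
    exact hne (by rw [weightPart, End.weightProj_of_notMem hiW, LinearMap.zero_apply])
  have hvj := hasWeight_weightPart hH j v
  obtain ⟨hevj, hcentj⟩ : ⁅e, weightPart h j v⁆ = 0 ∧
      ∀ y : L, ⁅e, y⁆ = 0 → ⁅weightPart h j v, y⁆ = 0 := by
    have stable : ∀ y ∈ LinearMap.ker (ad ℂ L e), ad ℂ L h y ∈ LinearMap.ker (ad ℂ L e) :=
      fun y hy => D.lie_mem_centralizer hy
    refine ⟨End.weightProj_mem stable j hev, fun y hy => ?_⟩
    have : y ∈ LinearMap.ker (ad ℂ L (weightPart h j v)) :=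
      End.le_of_forall_weight hH stable (fun i y hy hi => ?_) hy
    · exact this
    change ⁅weightPart h j v, y⁆ = 0
    have hi : HasWeight h i y := hi
    rw [← lie_skew, neg_eq_zero, ← weightPart_lie hH hi, ← lie_skew, hcent y hy, neg_zero, map_zero]
  obtain ⟨hjm, hmj⟩ := D.weight_le j _ hvj hj0
  have hj1 : 0 < j := by
    by_contra hj
    exact hj0 (D.eq_zero_of_lie_eq_zero hvj (by omega) hevj)
  lift j to ℕ using hj1.le
  set u := weightPart h j v with hu
  have hfu : ∀ x : L, HasWeight h (m + 2 - j) x → ⁅⁅f, x⁆, v⁆ = ⁅⁅f, x⁆, u⁆ := by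
    intro x hx
    have hfx := D.weight_f.lie hx
    rw [hu, ← weightPart_lie hH hfx, show (-2 + (m + 2 - j) + j : ℤ) = m by ring]
    conv_lhs => rw [← (ad ℂ L h).sum_weightProj v]
    conv_rhs => rw [← (ad ℂ L h).sum_weightProj v]
    simp only [lie_sum, map_sum]
    refine Finset.sum_congr rfl fun i _ => ?_
    have hvi := hfx.lie (hasWeight_weightPart hH i v)
    rcases lt_trichotomy i j with hij | rfl | hij
    · rw [hjmin i hij, lie_zero, map_zero]
    · rw [show (-2 + (m + 2 - j) + j : ℤ) = m by ring] at hvi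
      exact hvi.weightPart_self.symm
    · rw [D.eq_zero hvi (by omega), map_zero]
  let φ : L →ₗ[ℂ] L := -(ad ℂ L v ∘ₗ ad ℂ L f)
  have hφ : ∀ x, φ x = ⁅⁅f, x⁆, v⁆ := fun x => by simp [φ]
  let U : Submodule ℂ L :=
    (LinearMap.ker (ad ℂ L e) ⊓ (ad ℂ L h).eigenspace ((m + 2 - j : ℤ) : ℂ)).map φ
  suffices hzU : z ∈ U by
    obtain ⟨x, ⟨hx, -⟩, rfl⟩ := hzU
    exact ⟨x, hx, (hφ x).symm⟩
  rw [← LinearMap.BilinForm.orthogonal_orthogonal (IsKilling.killingForm_nondegenerate ℂ L)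
    (LieModule.traceForm_isSymm ℂ L L).isRefl U]
  intro w hw
  by_contra hwz
  have hw' := hasWeight_weightPart hH (-m) w
  obtain ⟨es, fs, en, t, fn, S⟩ := D.exists_jordanSplitting hm hw'
  have hw0 : weightPart h (-m) w ≠ 0 := fun h0 => hwz (by
    change killingForm ℂ L w z = 0
    rw [← killingForm_weightPart hH hz, h0, map_zero, LinearMap.zero_apply])
  refine hj0 (S.eq_zero_of_degenerate D hw' hcentj hw0 (by omega) hvj hevj fun x hx => ?_)
  obtain ⟨x', hx'⟩ : ∃ x', x' = weightPart h (m + 2 - j) x := ⟨_, rfl⟩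
  have hx'w : HasWeight h (m + 2 - j) x' := hx' ▸ hasWeight_weightPart hH _ x
  have hex' : ⁅e, x'⁆ = 0 := by rw [hx', ← weightPart_lie hH D.weight_e, hx, map_zero]
  have h1 : ⁅⁅f, u⁆, x'⁆ = φ x' := by
    have h2 := leibniz_lie f u x'
    rw [hcentj x' hex', lie_zero] at h2
    rw [hφ, hfu x' hx'w, ← lie_skew ⁅f, x'⁆ u]
    exact eq_neg_of_add_eq_zero_left h2.symm
  have h3 : HasWeight h m (φ x') := by
    rw [hφ, hfu x' hx'w]
    have := (D.weight_f.lie hx'w).lie hvj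
    rwa [show (-2 + (m + 2 - j) + j : ℤ) = m by ring] at this
  rw [← killingForm_weightPart' hH hw', show (- -m : ℤ) = -2 + j + (m + 2 - j) by ring,
    weightPart_lie hH (D.weight_f.lie hvj), ← hx', h1, killingForm_weightPart hH h3]
  rw [killingForm_comm]
  exact hw _ ⟨x', ⟨hex', End.mem_eigenspace_iff.mpr hx'w⟩, rfl⟩

end DistinguishedTriple

end Reduction

/-- Distinguished non-regular nilpotent elements of the complex simple
Lie algebra of type corresponding to `LieAlgebra.e₈` satisfy property (P). -/
theorem propertyP_of_type_7
    (L : Type*) [LieRing L] [LieAlgebra ℂ L] [FiniteDimensional ℂ L]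
    [LieAlgebra.IsSimple ℂ L]
    (htype : Nonempty (L ≃ₗ⁅ℂ⁆ LieAlgebra.e₈ ℂ))
    (e h f : L) (ht : IsSl2Triple h e f) (he : IsNilpotent (LieAlgebra.ad ℂ L e))
    (hdist : IsDistinguished L e)
    (hnonreg : Module.finrank ℂ ↥(centralizer L e) ≠ LieAlgebra.rank ℂ L) :
    PropertyP L e h f := by
  obtain ⟨h0, hef, hhe, hhf⟩ := ht
  rw [← Nat.cast_smul_eq_nsmul ℂ] at hhe hhf
  have r := sl2Relations_ad (by exact_mod_cast hhe) (by exact_mod_cast hhf) hef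
  have hH := r.iSup_eigenspace_eq_top
  have hwe : HasWeight h 2 e := by simpa [HasWeight] using hhe
  have he0 : e ≠ 0 := fun h1 => h0 (by rw [← hef, h1, zero_lie])
  obtain ⟨n, hn, ⟨x, hx0, hx⟩, hle⟩ := exists_max_weight hH hwe he0
  have D : DistinguishedTriple e h f n :=
    ⟨hwe, by simpa [HasWeight] using hhf, hef, hle,
      fun y hy hy0 => eq_zero_of_distinguished r hwe hdist hy hy0⟩
  have comm : ∀ y : L, ⁅y, e⁆ = 0 ↔ ⁅e, y⁆ = 0 := fun y => by rw [← lie_skew, neg_eq_zero]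
  rintro m ⟨z₀, hz₀, hz₀c, hz₀m⟩ hmax v hv hv0 z - hz
  have hnm : (n : ℂ) ≤ m := hmax n ⟨x, hx0, ⟨(comm x).mpr (D.eq_zero (hwe.lie hx) (by omega)),
    fun y hy => D.lie_eq_zero_of_weight_max hx ((comm y).mp hy)⟩, by simpa [HasWeight] using hx⟩
  obtain ⟨k, rfl⟩ := r.exists_weight_eq ((comm z₀).mp hz₀c.1) hz₀m hz₀
  have hkn := (hle k z₀ (by simpa [HasWeight] using hz₀m) hz₀).2
  have hnk : n ≤ k := by exact_mod_cast hnm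
  obtain rfl : n = k := by omega
  obtain ⟨y, hey, hy⟩ := D.exists_lie_lie_eq hn ((comm v).mp hv.1)
    (fun y hy => hv.2 y ((comm y).mpr hy)) hv0 (z := z) (by simpa [HasWeight] using hz)
  exact ⟨y, (comm y).mpr hey, hy⟩
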